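/- Let H be a real Hilbert space, λ ∈ ℝ, and let (f_h) be a sequence of proper, λ-convex, lower semicontinuous functions f_h : H → (-∞,∞] that Mosco-converges to a proper, λ-convex, lower semicontinuous function f : H → (-∞,∞]. Let x_{h,0}, x_{h,1}, x_0, x_1 ∈ H satisfy x_{h,i} → x_i strongly for i = 0,1 and sup_h |∇f_h|(x_{h,i}) < ∞ for i = 0,1. Then the functionals Θ_{f_h, x_{h,0}, x_{h,1}} Γ-converge to Θ_{f, x_0, x_1} in the topology of C([0,1];H), i.e.: (a) for every γ ∈ C([0,1];H) there exist γ_h → γ uniformly with limsup_h Θ_{f_h,x_{h,0},x_{h,1}}(γ_h) ≤ Θ_{f,x_0,x_1}(γ); and (b) for every sequence γ_h → γ uniformly, liminf_h Θ_{f_h,x_{h,0},x_{h,1}}(γ_h) ≥ Θ_{f,x_0,x_1}(γ). -/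

import Mathlib

open Filter Topology MeasureTheory Set
open scoped ENNReal RealInnerProductSpace

noncomputable section

attribute [local instance] Classical.propDecidable

variable {H : Type*} [NormedAddCommGroup H] [InnerProductSpace ℝ H] [CompleteSpace H]

/-- `f : H → (-∞,∞]` is proper: not identically `⊤` (and it never takes the value `⊥`). -/
def ProperFn (f : H → EReal) : Prop :=
  (∃ x, f x ≠ ⊤) ∧ ∀ x, f x ≠ ⊥

/-- `f` is `λ`-convex: `x ↦ f x - (λ/2)‖x‖²` is convex, expressed via the perturbed
convexity inequality. -/
def LambdaConvex (lam : ℝ) (f : H → EReal) : Prop :=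
  ∀ x y : H, ∀ t : ℝ, 0 ≤ t → t ≤ 1 →
    f ((1 - t) • x + t • y)
      ≤ ((1 - t : ℝ) : EReal) * f x + ((t : ℝ) : EReal) * f y
        - ((lam / 2 * (t * (1 - t)) * ‖x - y‖ ^ 2 : ℝ) : EReal)

/-- The subdifferential of a `λ`-convex function at `x` (contained in the domain of `f`). -/
def subdiff (lam : ℝ) (f : H → EReal) (x : H) : Set H :=
  {p : H | f x ≠ ⊤ ∧
    ∀ y : H, f x + ((⟪p, y - x⟫ + lam / 2 * ‖y - x‖ ^ 2 : ℝ) : EReal) ≤ f y}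

/-- `∇f(x)`: the element of minimal norm of `∂f(x)` (junk value `0` if there is none). -/
def gradMin (lam : ℝ) (f : H → EReal) (x : H) : H :=
  if h : ∃ p ∈ subdiff lam f x, ∀ q ∈ subdiff lam f x, ‖p‖ ≤ ‖q‖ then h.choose else 0

/-- `|∇f|(x) ∈ [0,∞]`, equal to `+∞` when `∂f(x) = ∅` (in particular when `f x = ⊤`). -/
def gradNorm (lam : ℝ) (f : H → EReal) (x : H) : ℝ≥0∞ :=
  if (subdiff lam f x).Nonempty then ENNReal.ofReal ‖gradMin lam f x‖ else ⊤

/-- The resolvent `J_τ(x)`: the minimizer of `y ↦ f y + ‖y-x‖²/(2τ)` (junk `0` if none). -/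
def Jres (f : H → EReal) (τ : ℝ) (x : H) : H :=
  if h : ∃ y : H, ∀ z : H,
      f y + ((‖y - x‖ ^ 2 / (2 * τ) : ℝ) : EReal)
        ≤ f z + ((‖z - x‖ ^ 2 / (2 * τ) : ℝ) : EReal)
  then h.choose else 0

/-- The Moreau–Yosida regularization `f_τ(x) = min_y (f y + ‖y-x‖²/(2τ))`. -/
def moreau (f : H → EReal) (τ : ℝ) (x : H) : ℝ :=
  (f (Jres f τ x)).toReal + ‖Jres f τ x - x‖ ^ 2 / (2 * τ)

/-- `γ` is absolutely continuous on `[a,b]` with an integrable derivative. -/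
abbrev IsACCurve (a b : ℝ) (γ : ℝ → H) : Prop :=
  ∃ g : ℝ → H, IntegrableOn g (Icc a b) ∧ ∀ t ∈ Icc a b, γ t = γ a + ∫ s in a..t, g s

/-- The action `I_f^{[a,b]}(γ) = ∫_a^b (‖γ̇‖² + |∇f|²(γ)) dt ∈ [0,∞]`, set to `+∞` when `γ`
is not absolutely continuous. -/
def actionFn (lam : ℝ) (f : H → EReal) (a b : ℝ) (γ : ℝ → H) : ℝ≥0∞ :=
  if h : IsACCurve a b γ then
    ∫⁻ t in Ioc a b, (ENNReal.ofReal (‖h.choose t‖ ^ 2) + gradNorm lam f (γ t) ^ 2)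
  else ⊤

/-- `Θ_{f,x₀,x₁}`: the action on `[0,1]` with endpoint constraints. -/
def Theta (lam : ℝ) (f : H → EReal) (x0 x1 : H) (γ : ℝ → H) : ℝ≥0∞ :=
  if γ 0 = x0 ∧ γ 1 = x1 then actionFn lam f 0 1 γ else ⊤

/-- `Γ_δ(x₀,x_δ)`: infimum of the action over curves joining the endpoints. -/
def GammaInf (lam : ℝ) (f : H → EReal) (δ : ℝ) (x0 xδ : H) : ℝ≥0∞ :=
  ⨅ (γ : ℝ → H) (_ : γ 0 = x0 ∧ γ δ = xδ), actionFn lam f 0 δ γ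

/-- Mosco convergence of `fh` to `f`: recovery sequences for the strong topology, and the
`liminf` inequality along weakly convergent sequences. -/
def Mosco (fh : ℕ → H → EReal) (f : H → EReal) : Prop :=
  (∀ x : H, ∃ xh : ℕ → H, Tendsto xh atTop (𝓝 x) ∧
      Filter.limsup (fun h => fh h (xh h)) atTop ≤ f x) ∧
  (∀ (xh : ℕ → H) (x : H),
      (∀ p : H, Tendsto (fun h => ⟪xh h, p⟫) atTop (𝓝 ⟪x, p⟫)) →
      f x ≤ Filter.liminf (fun h => fh h (xh h)) atTop)

/-!
The action is kinetic energy plus the integral of the squared slope. For the lower bound, the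
kinetic energy is lower semicontinuous because bounded sets of velocities are weakly compact in
`L²`, and `|∇f|(x) ≤ liminf |∇f_h|(x_h)` whenever `x_h → x`, because Mosco convergence lets one
pass to the limit in the subdifferential inequality along weakly convergent subgradients; Fatou's
lemma concludes.

For the upper bound, Mosco convergence makes the resolvents of `f_h` converge strongly to those of
`f`, uniformly on compact sets. For a fixed small `δ`, apply the `δ`-resolvent of `f_h` to `γ`, bent
slightly so as to join `x_{h,0}` to `x_{h,1}`: up to errors vanishing as `h → ∞` and then `δ → 0`,
the image is no longer than `γ` and the slope of `f_h` along it is at most that of `f` along `γ`.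
Its endpoints are off by `O(δ)`. They are corrected by resting at `x_{h,i}` for an extra time `δ`
while the resolvent parameter decreases to `0`: there the bound on `|∇f_h|(x_{h,i})` controls both
the speed and the slope, so this costs only `O(δ)`. Letting `δ → 0` along a diagonal sequence gives
the recovery sequence.
-/

section WeakConvergence

variable {E : Type*} [NormedAddCommGroup E] [InnerProductSpace ℝ E]

/-- Weak convergence of a sequence in an inner product space, tested against vectors: this is the
hypothesis of the `liminf` inequality in `Mosco`. -/
def WeakTendsto (x : ℕ → E) (y : E) : Prop :=
  ∀ p : E, Tendsto (fun n => ⟪x n, p⟫) atTop (𝓝 ⟪y, p⟫)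

theorem weakTendsto_of_tendsto {x : ℕ → E} {y : E} (hx : Tendsto x atTop (𝓝 y)) :
    WeakTendsto x y :=
  fun _ => hx.inner tendsto_const_nhds

namespace WeakTendsto

variable {x : ℕ → E} {y : E}

theorem norm_le_of_eventually_le (hx : WeakTendsto x y) {C : ℝ} (hC : ∀ᶠ n in atTop, ‖x n‖ ≤ C) :
    ‖y‖ ≤ C := by
  have hyy : ‖y‖ * ‖y‖ ≤ C * ‖y‖ := by
    rw [← real_inner_self_eq_norm_mul_norm]
    refine le_of_tendsto (hx y) (hC.mono fun n hn => ?_)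
    exact (real_inner_le_norm _ _).trans (by gcongr)
  obtain ⟨n, hn⟩ := hC.exists
  rcases (norm_nonneg y).eq_or_lt with h0 | h0
  · exact h0 ▸ (norm_nonneg _).trans hn
  · exact le_of_mul_le_mul_right hyy h0

theorem exists_norm_le [CompleteSpace E] (hx : WeakTendsto x y) : ∃ C, ∀ n, ‖x n‖ ≤ C := by
  obtain ⟨C, hC⟩ := banach_steinhaus (g := fun n => innerSL ℝ (x n)) fun p => by
    obtain ⟨C, hC⟩ := (hx p).norm.bddAbove_range
    exact ⟨C, fun n => hC ⟨n, rfl⟩⟩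
  exact ⟨C, fun n => by simpa only [innerSL_apply_norm] using hC n⟩

theorem tendsto_inner [CompleteSpace E] (hx : WeakTendsto x y) {z : ℕ → E} {w : E}
    (hz : Tendsto z atTop (𝓝 w)) : Tendsto (fun n => ⟪x n, z n⟫) atTop (𝓝 ⟪y, w⟫) := by
  obtain ⟨C, hC⟩ := hx.exists_norm_le
  have hdiff : Tendsto (fun n => ⟪x n, z n - w⟫) atTop (𝓝 0) := by
    have hCz : Tendsto (fun n => C * ‖z n - w‖) atTop (𝓝 0) := by
      simpa using (hz.sub_const w).norm.const_mul C
    refine squeeze_zero_norm (fun n => ?_) hCz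
    exact (abs_real_inner_le_norm _ _).trans (by gcongr; exact hC n)
  simpa only [inner_sub_right, sub_add_cancel, zero_add] using hdiff.add (hx w)

end WeakTendsto

theorem exists_subseq_weakTendsto_of_separable [CompleteSpace E]
    [TopologicalSpace.SeparableSpace E] {x : ℕ → E} {C : ℝ} (hx : ∀ n, ‖x n‖ ≤ C) :
    ∃ (y : E) (φ : ℕ → ℕ), StrictMono φ ∧ WeakTendsto (x ∘ φ) y := by
  let u : ℕ → WeakDual ℝ E := fun n =>
    StrongDual.toWeakDual (InnerProductSpace.toDual ℝ E (x n))
  have hu : ∀ n, u n ∈ WeakDual.toStrongDual ⁻¹' Metric.closedBall (0 : StrongDual ℝ E) C :=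
    fun n => mem_closedBall_zero_iff.2 <|
      ((InnerProductSpace.toDual ℝ E).norm_map (x n)).trans_le (hx n)
  obtain ⟨l, -, φ, hφ, hlim⟩ := WeakDual.isSeqCompact_closedBall (𝕜 := ℝ) (E := E) 0 C hu
  refine ⟨(InnerProductSpace.toDual ℝ E).symm (WeakDual.toStrongDual l), φ, hφ, fun p => ?_⟩
  rw [InnerProductSpace.toDual_symm_apply]
  exact ((WeakDual.eval_continuous (𝕜 := ℝ) p).tendsto l).comp hlim

theorem exists_subseq_weakTendsto [CompleteSpace E] {x : ℕ → E} {C : ℝ} (hx : ∀ n, ‖x n‖ ≤ C) :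
    ∃ (y : E) (φ : ℕ → ℕ), StrictMono φ ∧ WeakTendsto (x ∘ φ) y := by
  let S : Submodule ℝ E := (Submodule.span ℝ (range x)).topologicalClosure
  have hxS : ∀ n, x n ∈ S := fun n =>
    Submodule.le_topologicalClosure _ (Submodule.subset_span ⟨n, rfl⟩)
  have : CompleteSpace S := (Submodule.isClosed_topologicalClosure _).completeSpace_coe
  have : TopologicalSpace.SeparableSpace S := by
    refine TopologicalSpace.IsSeparable.separableSpace (s := (S : Set E)) ?_
    exact ((countable_range x).isSeparable.span (R := ℝ)).closure
  obtain ⟨y, φ, hφ, hy⟩ := exists_subseq_weakTendsto_of_separable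
    (x := fun n => (⟨x n, hxS n⟩ : S)) (C := C) hx
  refine ⟨y, φ, hφ, fun p => ?_⟩
  simpa only [Function.comp_def, Submodule.inner_orthogonalProjectionOnto_eq_of_mem_left]
    using hy (S.orthogonalProjectionOnto p)

end WeakConvergence

section ProxObjective

variable {E : Type*} [NormedAddCommGroup E] {κ : ℝ} {f : E → EReal} {x y : E}

/-- The objective `y ↦ f y + (κ/2)‖y - x‖²`, whose minimizer is the resolvent of `f` at `x` with
step `1/κ`. -/
def proxObjective (κ : ℝ) (x : E) (f : E → EReal) (y : E) : EReal :=
  f y + ((κ / 2 * ‖y - x‖ ^ 2 : ℝ) : EReal)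

theorem proxObjective_ne_bot (hf : f y ≠ ⊥) : proxObjective κ x f y ≠ ⊥ := by
  simpa [proxObjective, EReal.add_eq_bot_iff, -EReal.coe_mul] using hf

theorem lowerSemicontinuous_proxObjective (hl : LowerSemicontinuous f) :
    LowerSemicontinuous (proxObjective κ x f) := by
  have hcont : Continuous fun y => ((κ / 2 * ‖y - x‖ ^ 2 : ℝ) : EReal) :=
    continuous_coe_real_ereal.comp (by fun_prop)
  exact hl.add' hcont.lowerSemicontinuous fun y =>
    EReal.continuousAt_add (.inr (EReal.coe_ne_bot _)) (.inr (EReal.coe_ne_top _))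

end ProxObjective

section Subdifferential

variable {E : Type*} [NormedAddCommGroup E] [InnerProductSpace ℝ E]
variable {lam κ : ℝ} {f : E → EReal} {x y p q : E}

theorem mem_subdiff_iff_of_eq_coe {a : ℝ} (hx : f x = a) :
    p ∈ subdiff lam f x ↔
      ∀ (y : E) (b : ℝ), f y ≤ b → a + (⟪p, y - x⟫ + lam / 2 * ‖y - x‖ ^ 2) ≤ b := by
  simp only [subdiff, mem_ofPred_eq, hx, EReal.coe_ne_top, ne_eq, not_false_eq_true, true_and]
  refine forall_congr' fun y => ⟨fun h b hb => by exact_mod_cast h.trans hb, fun h => ?_⟩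
  exact EReal.le_of_forall_lt_iff_le.1 fun b hb => by exact_mod_cast h b hb.le

theorem exists_eq_coe_of_mem_subdiff (hf : ∀ x, f x ≠ ⊥) (hp : p ∈ subdiff lam f x) :
    ∃ a : ℝ, f x = a :=
  ⟨_, (EReal.coe_toReal hp.1 (hf x)).symm⟩

theorem mul_norm_sub_sq_le_inner_of_mem_subdiff (hf : ∀ x, f x ≠ ⊥) (hp : p ∈ subdiff lam f x)
    (hq : q ∈ subdiff lam f y) : lam * ‖x - y‖ ^ 2 ≤ ⟪p - q, x - y⟫ := by
  obtain ⟨a, ha⟩ := exists_eq_coe_of_mem_subdiff hf hp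
  obtain ⟨b, hb⟩ := exists_eq_coe_of_mem_subdiff hf hq
  have hxy := (mem_subdiff_iff_of_eq_coe ha).1 hp y b hb.le
  have hyx := (mem_subdiff_iff_of_eq_coe hb).1 hq x a ha.le
  rw [← neg_sub x y, inner_neg_right, norm_neg] at hxy
  rw [inner_sub_left]
  linarith

theorem LambdaConvex.le_coe (hc : LambdaConvex lam f) {a b t : ℝ} (hx : f x ≤ a) (hy : f y ≤ b)
    (h0 : 0 ≤ t) (h1 : t ≤ 1) :
    f ((1 - t) • x + t • y) ≤
      (((1 - t) * a + t * b - lam / 2 * (t * (1 - t)) * ‖x - y‖ ^ 2 : ℝ) : EReal) := by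
  refine (hc x y t h0 h1).trans ?_
  rw [EReal.coe_sub ((1 - t) * a + t * b), EReal.coe_add, EReal.coe_mul, EReal.coe_mul]
  refine EReal.sub_le_sub (add_le_add ?_ ?_) le_rfl
  · exact mul_le_mul_of_nonneg_left hx (by exact_mod_cast sub_nonneg.2 h1)
  · exact mul_le_mul_of_nonneg_left hy (by exact_mod_cast h0)

theorem norm_sq_convex_combination (y z : E) (t : ℝ) :
    ‖(1 - t) • y + t • z‖ ^ 2 =
      (1 - t) * ‖y‖ ^ 2 + t * ‖z‖ ^ 2 - t * (1 - t) * ‖y - z‖ ^ 2 := by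
  rw [norm_add_sq_real, norm_sub_sq_real, norm_smul, norm_smul, real_inner_smul_left,
    real_inner_smul_right, mul_pow, mul_pow, Real.norm_eq_abs, Real.norm_eq_abs, sq_abs, sq_abs]
  ring

theorem lambdaConvex_proxObjective (hc : LambdaConvex lam f) (κ : ℝ) (x : E) :
    LambdaConvex (lam + κ) (proxObjective κ x f) := by
  intro y z t h0 h1
  have hquad : -(lam / 2 * (t * (1 - t)) * ‖y - z‖ ^ 2) +
      κ / 2 * ‖(1 - t) • y + t • z - x‖ ^ 2 =
      (1 - t) * (κ / 2 * ‖y - x‖ ^ 2) + t * (κ / 2 * ‖z - x‖ ^ 2) +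
        -((lam + κ) / 2 * (t * (1 - t)) * ‖y - z‖ ^ 2) := by
    rw [show (1 - t) • y + t • z - x = (1 - t) • (y - x) + t • (z - x) by module,
      norm_sq_convex_combination, sub_sub_sub_cancel_right]
    ring
  have hdistrib {s : ℝ} (hs : 0 ≤ s) (r : ℝ) (a : EReal) :
      (s : EReal) * (a + r) = s * a + ((s * r : ℝ) : EReal) := by
    rw [EReal.coe_mul, EReal.left_distrib_of_nonneg_of_ne_top (by exact_mod_cast hs)
      (EReal.coe_ne_top s)]
  have hsub (a : EReal) (r : ℝ) : a - r = a + ((-r : ℝ) : EReal) := sub_eq_add_neg _ _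
  refine (add_le_add_left (hc y z t h0 h1) _).trans_eq ?_
  rw [proxObjective, proxObjective, hdistrib (sub_nonneg.2 h1), hdistrib h0,
    hsub, hsub, add_assoc, ← EReal.coe_add, hquad, EReal.coe_add, EReal.coe_add]
  abel

theorem mem_subdiff_proxObjective :
    p ∈ subdiff (lam + κ) (proxObjective κ x f) y ↔ p - κ • (y - x) ∈ subdiff lam f y := by
  have hexpand (z : E) : κ / 2 * ‖y - x‖ ^ 2 + (⟪p, z - y⟫ + (lam + κ) / 2 * ‖z - y‖ ^ 2) =
      ⟪p - κ • (y - x), z - y⟫ + lam / 2 * ‖z - y‖ ^ 2 + κ / 2 * ‖z - x‖ ^ 2 := by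
    rw [← sub_add_sub_cancel z y x, norm_add_sq_real, inner_sub_left, real_inner_smul_left,
      real_inner_comm (z - y) (y - x)]
    ring
  refine and_congr (not_congr ?_) (forall_congr' fun z => ?_)
  · exact not_iff_not.1
      (EReal.add_ne_top_iff_ne_top_left (EReal.coe_ne_bot _) (EReal.coe_ne_top _))
  · rw [proxObjective, proxObjective, add_assoc, ← EReal.coe_add, hexpand, EReal.coe_add,
      ← add_assoc]
    exact (EReal.addLECancellable_coe _).add_le_add_iff_right

theorem zero_mem_subdiff_of_forall_le (hc : LambdaConvex lam f) {m : ℝ} (hx : f x = m)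
    (hmin : ∀ y, f x ≤ f y) : 0 ∈ subdiff lam f x := by
  refine (mem_subdiff_iff_of_eq_coe hx).2 fun y b hy => ?_
  rw [inner_zero_left, zero_add]
  have hsegment {t : ℝ} (h0 : 0 < t) (h1 : t ≤ 1) :
      m + lam / 2 * ‖y - x‖ ^ 2 ≤ b + t * (lam / 2 * ‖y - x‖ ^ 2) := by
    have h := (hmin _).trans (hc.le_coe hx.le hy h0.le h1)
    rw [hx, EReal.coe_le_coe_iff, norm_sub_rev] at h
    refine le_of_mul_le_mul_left ?_ h0
    linarith
  have hlim : Tendsto (fun t : ℝ => b + t * (lam / 2 * ‖y - x‖ ^ 2)) (𝓝[>] 0) (𝓝 b) := by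
    refine Tendsto.mono_left ?_ nhdsWithin_le_nhds
    exact Continuous.tendsto' (by fun_prop) _ _ (by simp)
  refine ge_of_tendsto hlim ?_
  filter_upwards [Ioc_mem_nhdsGT one_pos] with t ht using hsegment ht.1 ht.2

theorem bddBelow_of_mem_subdiff (hlam : 0 < lam) (hf : ∀ x, f x ≠ ⊥) (hq : q ∈ subdiff lam f x) :
    ∃ c : ℝ, ∀ y, (c : EReal) ≤ f y := by
  obtain ⟨a, ha⟩ := exists_eq_coe_of_mem_subdiff hf hq
  refine ⟨a - ‖q‖ ^ 2 / (2 * lam), fun y => EReal.le_of_forall_lt_iff_le.1 fun b hb => ?_⟩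
  have hsub := (mem_subdiff_iff_of_eq_coe ha).1 hq y b hb.le
  have hinner : -(‖q‖ * ‖y - x‖) ≤ ⟪q, y - x⟫ := neg_le_of_abs_le (abs_real_inner_le_norm _ _)
  have hsq : ‖q‖ * ‖y - x‖ ≤ ‖q‖ ^ 2 / (2 * lam) + lam / 2 * ‖y - x‖ ^ 2 := by
    have hnonneg : 0 ≤ (‖q‖ - lam * ‖y - x‖) ^ 2 / (2 * lam) := by positivity
    have hexpand : (‖q‖ - lam * ‖y - x‖) ^ 2 / (2 * lam) =
        ‖q‖ ^ 2 / (2 * lam) + lam / 2 * ‖y - x‖ ^ 2 - ‖q‖ * ‖y - x‖ := by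
      field_simp
      ring
    linarith
  exact_mod_cast (by linarith : a - ‖q‖ ^ 2 / (2 * lam) ≤ b)

theorem LambdaConvex.norm_sub_sq_le (hc : LambdaConvex lam f) {m e : ℝ}
    (hm : ∀ z, (m : EReal) ≤ f z) (hx : f x ≤ ((m + e : ℝ) : EReal))
    (hy : f y ≤ ((m + e : ℝ) : EReal)) : lam / 8 * ‖x - y‖ ^ 2 ≤ e := by
  have h := (hm _).trans (hc.le_coe hx hy (by norm_num : (0 : ℝ) ≤ 1 / 2) (by norm_num))
  rw [EReal.coe_le_coe_iff] at h
  linarith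

theorem LambdaConvex.cauchySeq_of_minimizing (hlam : 0 < lam) (hc : LambdaConvex lam f) {m : ℝ}
    (hm : ∀ z, (m : EReal) ≤ f z) {z : ℕ → E} {e : ℕ → ℝ} (he : Antitone e)
    (he0 : Tendsto e atTop (𝓝 0)) (hz : ∀ n, f (z n) ≤ ((m + e n : ℝ) : EReal)) :
    CauchySeq z := by
  refine cauchySeq_of_le_tendsto_0 (fun n => √(8 / lam * e n)) (fun i j n hi hj => ?_) ?_
  · have hle {k : ℕ} (hk : n ≤ k) : f (z k) ≤ ((m + e n : ℝ) : EReal) :=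
      (hz k).trans (by exact_mod_cast add_le_add_right (he hk) m)
    rw [dist_eq_norm]
    refine Real.le_sqrt_of_sq_le ?_
    rw [div_mul_eq_mul_div, le_div_iff₀ hlam]
    linarith [hc.norm_sub_sq_le hm (hle hi) (hle hj)]
  · simpa using (he0.const_mul (8 / lam)).sqrt

theorem LambdaConvex.exists_zero_mem_subdiff [CompleteSpace E] (hlam : 0 < lam)
    (hf : ∀ x, f x ≠ ⊥) (hc : LambdaConvex lam f) (hl : LowerSemicontinuous f)
    (hq : q ∈ subdiff lam f x) : ∃ y, 0 ∈ subdiff lam f y := by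
  obtain ⟨c, hc_le⟩ := bddBelow_of_mem_subdiff hlam hf hq
  obtain ⟨m, hm⟩ : ∃ m : ℝ, ⨅ z, f z = m :=
    ⟨_, (EReal.coe_toReal ((iInf_le f x).trans_lt (lt_top_iff_ne_top.2 hq.1)).ne
      ((EReal.bot_lt_coe c).trans_le (le_iInf hc_le)).ne').symm⟩
  have hm_le (z : E) : (m : EReal) ≤ f z := hm ▸ iInf_le f z
  have happrox (n : ℕ) : ∃ z, f z ≤ ((m + 1 / (n + 1) : ℝ) : EReal) := by
    have hlt : ⨅ z, f z < ((m + 1 / (n + 1) : ℝ) : EReal) := by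
      rw [hm]
      exact_mod_cast lt_add_of_pos_right m Nat.one_div_pos_of_nat
    exact (iInf_lt_iff.1 hlt).imp fun z hz => hz.le
  choose z hz using happrox
  obtain ⟨y, hy⟩ := cauchySeq_tendsto_of_complete <|
    hc.cauchySeq_of_minimizing hlam hm_le (fun i j hij => Nat.one_div_le_one_div hij)
      tendsto_one_div_add_atTop_nhds_zero_nat hz
  have hlim : Tendsto (fun n : ℕ => ((m + 1 / ((n : ℝ) + 1) : ℝ) : EReal)) atTop (𝓝 m) := by
    refine (continuous_coe_real_ereal.tendsto m).comp ?_
    simpa using (tendsto_one_div_add_atTop_nhds_zero_nat (𝕜 := ℝ)).const_add m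
  have hym : f y ≤ m := hl.isClosed_epigraph.mem_of_tendsto (hy.prodMk_nhds hlim) (.of_forall hz)
  have hy_eq : f y = m := hym.antisymm (hm_le y)
  exact ⟨y, zero_mem_subdiff_of_forall_le hc hy_eq fun z => hy_eq ▸ hm_le z⟩

end Subdifferential

section Resolvent

variable {E : Type*} [NormedAddCommGroup E] [InnerProductSpace ℝ E]
variable {lam τ σ : ℝ} {f : E → EReal} {x x' y y' p p' q : E}

/-- One implicit Euler step of the gradient flow of `f`: `y = J_τ(x)` is the resolvent of `x` and
`p = (x - y)/τ ∈ ∂f(y)`. The equation is multiplied by `τ` so that `τ = 0` is allowed, with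
`y = x`. -/
structure ResolventStep (lam : ℝ) (f : E → EReal) (τ : ℝ) (x y p : E) : Prop where
  mem_subdiff : p ∈ subdiff lam f y
  add_smul_eq : y + τ • p = x

namespace ResolventStep

theorem mul_norm_sub_le (hf : ∀ x, f x ≠ ⊥) (hy : ResolventStep lam f τ x y p)
    (hy' : ResolventStep lam f σ x' y' p') (hσ : 0 ≤ σ) :
    (1 + lam * σ) * ‖y - y'‖ ≤ ‖x - x'‖ + |τ - σ| * ‖p‖ := by
  have hmono := mul_norm_sub_sq_le_inner_of_mem_subdiff hf hy.mem_subdiff hy'.mem_subdiff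
  have hsplit : (y - y') + σ • (p - p') = (x - x') - (τ - σ) • p := by
    rw [← hy.add_smul_eq, ← hy'.add_smul_eq]
    module
  have hnorm : ‖(y - y') + σ • (p - p')‖ ≤ ‖x - x'‖ + |τ - σ| * ‖p‖ := by
    rw [hsplit, ← Real.norm_eq_abs, ← norm_smul]
    exact norm_sub_le _ _
  refine le_trans ?_ hnorm
  rcases (norm_nonneg (y - y')).eq_or_lt with h0 | h0
  · simp [← h0]
  · have hinner := real_inner_le_norm ((y - y') + σ • (p - p')) (y - y')
    rw [inner_add_left, real_inner_smul_left, real_inner_self_eq_norm_sq] at hinner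
    refine le_of_mul_le_mul_right ?_ h0
    linarith [mul_le_mul_of_nonneg_left hmono hσ]

theorem mul_norm_le (hf : ∀ x, f x ≠ ⊥) (hy : ResolventStep lam f τ x y p) (hτ : 0 < τ)
    (hq : q ∈ subdiff lam f x) : (1 + lam * τ) * ‖p‖ ≤ ‖q‖ := by
  have hx : ResolventStep lam f 0 x x q := ⟨hq, by simp⟩
  have h := hx.mul_norm_sub_le hf hy hτ.le
  rw [← hy.add_smul_eq, add_sub_cancel_left] at h
  simp only [sub_self, norm_zero, zero_add, zero_sub, abs_neg, abs_of_pos hτ, norm_smul,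
    Real.norm_eq_abs] at h
  refine le_of_mul_le_mul_left ?_ hτ
  linarith

theorem inv_smul_sub (hy : ResolventStep lam f τ x y p) (hτ : τ ≠ 0) :
    ResolventStep lam f τ x y (τ⁻¹ • (x - y)) := by
  rwa [← hy.add_smul_eq, add_sub_cancel_left, inv_smul_smul₀ hτ, hy.add_smul_eq]

end ResolventStep

theorem resolventStep_iff_zero_mem_subdiff_proxObjective (hτ : 0 < τ) :
    ResolventStep lam f τ x y (τ⁻¹ • (x - y)) ↔
      0 ∈ subdiff (lam + τ⁻¹) (proxObjective τ⁻¹ x f) y := by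
  rw [mem_subdiff_proxObjective, zero_sub, ← smul_neg, neg_sub]
  refine ⟨ResolventStep.mem_subdiff, fun h => ⟨h, ?_⟩⟩
  rw [smul_inv_smul₀ hτ.ne', add_sub_cancel]

theorem LambdaConvex.exists_resolventStep [CompleteSpace E] (hc : LambdaConvex lam f)
    (hf : ∀ x, f x ≠ ⊥) (hl : LowerSemicontinuous f) (hq : q ∈ subdiff lam f x') (hτ : 0 < τ)
    (hlamτ : 0 < 1 + lam * τ) (x : E) : ∃ y p, ResolventStep lam f τ x y p := by
  have hpos : 0 < lam + τ⁻¹ := by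
    refine pos_of_mul_pos_left ?_ hτ.le
    rwa [add_mul, inv_mul_cancel₀ hτ.ne', add_comm]
  have hq' : q + τ⁻¹ • (x' - x) ∈ subdiff (lam + τ⁻¹) (proxObjective τ⁻¹ x f) x' := by
    rwa [mem_subdiff_proxObjective, add_sub_cancel_right]
  obtain ⟨y, hy⟩ := (lambdaConvex_proxObjective hc τ⁻¹ x).exists_zero_mem_subdiff hpos
    (fun y => proxObjective_ne_bot (hf y)) (lowerSemicontinuous_proxObjective hl) hq'
  exact ⟨y, _, (resolventStep_iff_zero_mem_subdiff_proxObjective hτ).2 hy⟩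

theorem LambdaConvex.exists_resolventStep_norm_le [CompleteSpace E] (hc : LambdaConvex lam f)
    (hf : ∀ x, f x ≠ ⊥) (hl : LowerSemicontinuous f) (hq : q ∈ subdiff lam f x) (hτ : 0 ≤ τ)
    (hlamτ : 0 < 1 + lam * τ) :
    ∃ y p, ResolventStep lam f τ x y p ∧ (1 + lam * τ) * ‖p‖ ≤ ‖q‖ := by
  rcases hτ.eq_or_lt with rfl | hτ
  · exact ⟨x, q, ⟨hq, by simp⟩, by simp⟩
  · obtain ⟨y, p, hy⟩ := hc.exists_resolventStep hf hl hq hτ hlamτ x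
    exact ⟨y, p, hy, hy.mul_norm_le hf hτ hq⟩

end Resolvent

section RecoverySeq

variable {E : Type*} [NormedAddCommGroup E] {F : ℕ → E → EReal} {f : E → EReal}

/-- Every point is the strong limit of a recovery sequence for `f` along `F`: the `limsup` half of
Γ-convergence, and the first half of `Mosco`. -/
def HasRecoverySeq (F : ℕ → E → EReal) (f : E → EReal) : Prop :=
  ∀ x : E, ∃ xh : ℕ → E, Tendsto xh atTop (𝓝 x) ∧ limsup (fun h => F h (xh h)) atTop ≤ f x

theorem hasRecoverySeq_const (f : E → EReal) : HasRecoverySeq (fun _ => f) f :=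
  fun x => ⟨fun _ => x, tendsto_const_nhds, by rw [limsup_const]⟩

theorem HasRecoverySeq.comp (hrec : HasRecoverySeq F f) {φ : ℕ → ℕ}
    (hφ : Tendsto φ atTop atTop) : HasRecoverySeq (F ∘ φ) f := fun x => by
  obtain ⟨z, hz, hlimsup⟩ := hrec x
  exact ⟨z ∘ φ, hz.comp hφ, hφ.limsup_comp_le_limsup.trans hlimsup⟩

end RecoverySeq

section Slope

variable {E : Type*} [NormedAddCommGroup E] [InnerProductSpace ℝ E]
variable {lam : ℝ} {F : ℕ → E → EReal} {f : E → EReal} {x : ℕ → E} {x₀ : E}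

theorem add_coe_le_liminf {u v : ℕ → EReal} {r : ℕ → ℝ} {a : EReal} {r₀ : ℝ}
    (hu : a ≤ liminf u atTop) (hr : Tendsto r atTop (𝓝 r₀)) (h : ∀ n, u n + r n ≤ v n) :
    a + r₀ ≤ liminf v atTop := by
  have hr' : liminf (fun n => (r n : EReal)) atTop = r₀ :=
    ((continuous_coe_real_ereal.tendsto r₀).comp hr).liminf_eq
  calc a + r₀ ≤ liminf u atTop + liminf (fun n => (r n : EReal)) atTop := by rw [hr']; gcongr
    _ ≤ liminf (fun n => u n + r n) atTop := EReal.le_liminf_add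
    _ ≤ liminf v atTop := liminf_le_liminf (.of_forall h)

theorem mem_subdiff_of_weakTendsto [CompleteSpace E] (hf : ∃ z, f z ≠ ⊤)
    (hrec : HasRecoverySeq F f) (hx : Tendsto x atTop (𝓝 x₀))
    (hliminf : f x₀ ≤ liminf (fun n => F n (x n)) atTop) {p : ℕ → E} {p₀ : E}
    (hp : WeakTendsto p p₀) (hmem : ∀ n, p n ∈ subdiff lam (F n) (x n)) :
    p₀ ∈ subdiff lam f x₀ := by
  have hsub (z : E) : f x₀ + ((⟪p₀, z - x₀⟫ + lam / 2 * ‖z - x₀‖ ^ 2 : ℝ) : EReal) ≤ f z := by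
    obtain ⟨zh, hzh, hlimsup⟩ := hrec z
    refine le_trans (add_coe_le_liminf hliminf ?_ fun n => (hmem n).2 (zh n))
      (le_trans liminf_le_limsup hlimsup)
    exact (hp.tendsto_inner (hzh.sub hx)).add (((hzh.sub hx).norm.pow 2).const_mul _)
  refine ⟨fun htop => ?_, hsub⟩
  obtain ⟨z, hz⟩ := hf
  have h := hsub z
  rw [htop, EReal.top_add_coe, top_le_iff] at h
  exact hz h

theorem exists_mem_subdiff_norm_le_of_tendsto [CompleteSpace E] (hf : ∃ z, f z ≠ ⊤)
    (hrec : HasRecoverySeq F f) (hx : Tendsto x atTop (𝓝 x₀))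
    (hliminf : f x₀ ≤ liminf (fun n => F n (x n)) atTop) {p : ℕ → E} {c : ℕ → ℝ} {C : ℝ}
    (hmem : ∀ n, p n ∈ subdiff lam (F n) (x n)) (hpc : ∀ n, ‖p n‖ ≤ c n)
    (hc : Tendsto c atTop (𝓝 C)) : ∃ p₀ ∈ subdiff lam f x₀, ‖p₀‖ ≤ C := by
  obtain ⟨D, hD⟩ := hc.bddAbove_range
  obtain ⟨p₀, φ, hφ, hp₀⟩ := exists_subseq_weakTendsto fun n => (hpc n).trans (hD ⟨n, rfl⟩)
  have hφ' := hφ.tendsto_atTop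
  refine ⟨p₀, mem_subdiff_of_weakTendsto hf (hrec.comp hφ') (hx.comp hφ')
    (hliminf.trans hφ'.liminf_le_liminf_comp) hp₀ fun n => hmem (φ n), ?_⟩
  refine le_of_forall_pos_le_add fun ε hε => hp₀.norm_le_of_eventually_le ?_
  filter_upwards [(hc.comp hφ').eventually_le_const (lt_add_of_pos_right C hε)] with n hn
  exact (hpc _).trans hn

theorem exists_norm_minimal_mem_subdiff [CompleteSpace E] (h : (subdiff lam f x₀).Nonempty) :
    ∃ p ∈ subdiff lam f x₀, ∀ q ∈ subdiff lam f x₀, ‖p‖ ≤ ‖q‖ := by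
  have hbdd : BddBelow (norm '' subdiff lam f x₀) := ⟨0, by rintro _ ⟨q, -, rfl⟩; positivity⟩
  obtain ⟨c, -, hc, hc_mem⟩ := exists_seq_tendsto_sInf (h.image norm) hbdd
  choose p hp hpc using hc_mem
  obtain ⟨p₀, hp₀, hnorm⟩ := exists_mem_subdiff_norm_le_of_tendsto ⟨x₀, h.some_mem.1⟩
    (hasRecoverySeq_const f) (tendsto_const_nhds (x := x₀)) (by rw [liminf_const]) hp
    (fun n => (hpc n).le) hc
  exact ⟨p₀, hp₀, fun q hq => hnorm.trans (csInf_le hbdd (mem_image_of_mem norm hq))⟩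

theorem gradNorm_le_enorm {p : E} (hp : p ∈ subdiff lam f x₀) : gradNorm lam f x₀ ≤ ‖p‖ₑ := by
  rw [gradNorm, if_pos ⟨p, hp⟩, ← ofReal_norm]
  refine ENNReal.ofReal_le_ofReal ?_
  rw [gradMin]
  split_ifs with h
  · exact h.choose_spec.2 p hp
  · simp

theorem exists_enorm_eq_gradNorm [CompleteSpace E] (h : gradNorm lam f x₀ ≠ ⊤) :
    ∃ p ∈ subdiff lam f x₀, ‖p‖ₑ = gradNorm lam f x₀ := by
  have hne : (subdiff lam f x₀).Nonempty := by
    by_contra hempty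
    exact h (if_neg hempty)
  have hmin := exists_norm_minimal_mem_subdiff hne
  refine ⟨hmin.choose, hmin.choose_spec.1, ?_⟩
  rw [gradNorm, if_pos hne, gradMin, dif_pos hmin, ofReal_norm]

theorem gradNorm_le_liminf [CompleteSpace E] (hf : ∃ z, f z ≠ ⊤) (hrec : HasRecoverySeq F f)
    (hx : Tendsto x atTop (𝓝 x₀)) (hliminf : f x₀ ≤ liminf (fun n => F n (x n)) atTop) :
    gradNorm lam f x₀ ≤ liminf (fun n => gradNorm lam (F n) (x n)) atTop := by
  refine le_of_forall_gt_imp_ge_of_dense fun c hc => ?_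
  obtain ⟨φ, hφ, hlt⟩ :=
    extraction_of_frequently_atTop (frequently_lt_of_liminf_lt (by isBoundedDefault) hc)
  rcases eq_or_ne c ⊤ with rfl | hc_top
  · exact le_top
  have hex (n : ℕ) : ∃ p ∈ subdiff lam (F (φ n)) (x (φ n)), ‖p‖ ≤ c.toReal := by
    obtain ⟨p, hp, hpeq⟩ := exists_enorm_eq_gradNorm (hlt n).ne_top
    refine ⟨p, hp, ?_⟩
    rw [← toReal_enorm, hpeq]
    exact ENNReal.toReal_mono hc_top (hlt n).le
  choose p hp hpc using hex
  have hφ' := hφ.tendsto_atTop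
  obtain ⟨p₀, hp₀, hnorm⟩ := exists_mem_subdiff_norm_le_of_tendsto hf (hrec.comp hφ')
    (hx.comp hφ') (hliminf.trans hφ'.liminf_le_liminf_comp) hp hpc tendsto_const_nhds
  refine (gradNorm_le_enorm hp₀).trans ?_
  rw [← ofReal_norm]
  exact ENNReal.ofReal_le_of_le_toReal hnorm

theorem lowerSemicontinuous_gradNorm [CompleteSpace E] (hf : ∃ z, f z ≠ ⊤)
    (hl : LowerSemicontinuous f) : LowerSemicontinuous (gradNorm lam f) := by
  rw [lowerSemicontinuous_iff_isClosed_preimage]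
  refine fun c => IsSeqClosed.isClosed fun x x₀ hx hlim => ?_
  have hliminf : f x₀ ≤ liminf (fun n => f (x n)) atTop :=
    (hl.le_liminf x₀).trans hlim.liminf_le_liminf_comp
  exact (gradNorm_le_liminf hf (hasRecoverySeq_const f) hlim hliminf).trans
    (liminf_le_of_frequently_le' (.of_forall hx))

end Slope

section MoscoConvergence

variable {E : Type*} [NormedAddCommGroup E] [InnerProductSpace ℝ E]
variable {lam κ τ : ℝ} {F : ℕ → E → EReal} {f : E → EReal} {x : ℕ → E} {x₀ : E}

theorem tendsto_extend_const {α : Type*} [TopologicalSpace α] {u : ℕ → α} {a : α} {φ : ℕ → ℕ}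
    (hφ : StrictMono φ) (hu : Tendsto u atTop (𝓝 a)) :
    Tendsto (Function.extend φ u fun _ => a) atTop (𝓝 a) := by
  intro U hU
  obtain ⟨K, hK⟩ := eventually_atTop.1 (hu hU)
  refine mem_map.2 ?_
  filter_upwards [eventually_ge_atTop (φ K)] with n hn
  by_cases hex : ∃ k, φ k = n
  · obtain ⟨k, rfl⟩ := hex
    rw [mem_preimage, hφ.injective.extend_apply]
    exact hK k (hφ.le_iff_le.1 hn)
  · rw [mem_preimage, Function.extend_apply' _ _ _ hex]
    exact mem_of_mem_nhds hU

theorem WeakTendsto.extend_const {φ : ℕ → ℕ} (hφ : StrictMono φ) (hx : WeakTendsto x x₀) :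
    WeakTendsto (Function.extend φ x fun _ => x₀) x₀ := fun p => by
  simpa only [Function.apply_extend (fun y => ⟪y, p⟫), Function.comp_def] using
    tendsto_extend_const hφ (hx p)

namespace Mosco

theorem hasRecoverySeq (hM : Mosco F f) : HasRecoverySeq F f := hM.1

theorem comp (hM : Mosco F f) {φ : ℕ → ℕ} (hφ : StrictMono φ) : Mosco (F ∘ φ) f := by
  refine ⟨hM.hasRecoverySeq.comp hφ.tendsto_atTop, fun x x₀ hx => ?_⟩
  refine (hM.2 _ _ (WeakTendsto.extend_const hφ hx)).trans
    (hφ.tendsto_atTop.liminf_le_liminf_comp.trans_eq ?_)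
  simp only [Function.comp_def, hφ.injective.extend_apply]

theorem le_liminf_of_tendsto (hM : Mosco F f) (hx : Tendsto x atTop (𝓝 x₀)) :
    f x₀ ≤ liminf (fun n => F n (x n)) atTop :=
  hM.2 x x₀ (weakTendsto_of_tendsto hx)

theorem le_liminf_of_norm_le [CompleteSpace E] (hM : Mosco F f) {m : EReal}
    (hm : ∀ z, m ≤ f z) {C : ℝ} (hx : ∀ n, ‖x n‖ ≤ C) :
    m ≤ liminf (fun n => F n (x n)) atTop := by
  refine le_of_forall_gt_imp_ge_of_dense fun c hc => ?_
  obtain ⟨φ, hφ, hlt⟩ :=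
    extraction_of_frequently_atTop (frequently_lt_of_liminf_lt (by isBoundedDefault) hc)
  obtain ⟨z, ψ, hψ, hz⟩ := exists_subseq_weakTendsto fun n => hx (φ n)
  calc m ≤ f z := hm z
    _ ≤ liminf (fun n => F (φ (ψ n)) (x (φ (ψ n)))) atTop := (hM.comp (hφ.comp hψ)).2 _ z hz
    _ ≤ c := liminf_le_of_frequently_le' (.of_forall fun n => (hlt (ψ n)).le)

theorem tendsto_of_zero_mem_subdiff [CompleteSpace E] (hM : Mosco F f) (hlam : 0 < lam)
    (hf : ∀ x, f x ≠ ⊥) (hx₀ : 0 ∈ subdiff lam f x₀) {C : ℝ} (hC : ∀ n, ‖x n‖ ≤ C)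
    (hx : ∀ n, 0 ∈ subdiff lam (F n) (x n)) : Tendsto x atTop (𝓝 x₀) := by
  obtain ⟨a, ha⟩ := exists_eq_coe_of_mem_subdiff hf hx₀
  have hmin (z : E) : (a : EReal) ≤ f z :=
    EReal.le_of_forall_lt_iff_le.1 fun b hb => by
      have h := (mem_subdiff_iff_of_eq_coe ha).1 hx₀ z b hb.le
      rw [inner_zero_left, zero_add] at h
      exact_mod_cast le_of_add_le_of_nonneg_left h (by positivity)
  obtain ⟨z, hz, hlimsup⟩ := hM.hasRecoverySeq x₀
  have hzx : Tendsto (fun n => z n - x n) atTop (𝓝 0) := by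
    refine NormedAddGroup.tendsto_nhds_zero.2 fun e he => ?_
    set d := lam * e ^ 2 / 4
    have hd : 0 < d := by positivity
    have hupper : limsup (fun n => F n (z n)) atTop < ((a + d : ℝ) : EReal) :=
      hlimsup.trans_lt (ha ▸ EReal.coe_lt_coe (lt_add_of_pos_right a hd))
    have hlower : ((a - d : ℝ) : EReal) < liminf (fun n => F n (x n)) atTop :=
      (EReal.coe_lt_coe (sub_lt_self a hd)).trans_le (hM.le_liminf_of_norm_le hmin hC)
    filter_upwards [eventually_lt_of_limsup_lt hupper, eventually_lt_of_lt_liminf hlower]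
      with n hzn hxn
    have hsub := (hx n).2 (z n)
    rw [inner_zero_left, zero_add] at hsub
    have hlt : a - d + lam / 2 * ‖z n - x n‖ ^ 2 < a + d := by
      exact_mod_cast ((add_le_add_left hxn.le _).trans hsub).trans_lt hzn
    refine lt_of_pow_lt_pow_left₀ 2 he.le (lt_of_mul_lt_mul_left ?_ hlam.le)
    simp only [d] at hlt
    linarith
  simpa using hz.sub hzx

end Mosco

theorem Mosco.mosco_proxObjective (hM : Mosco F f) (hκ : 0 ≤ κ) (y : E) :
    Mosco (fun n => proxObjective κ y (F n)) (proxObjective κ y f) := by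
  constructor
  · intro x
    obtain ⟨z, hz, hlimsup⟩ := hM.hasRecoverySeq x
    have hq : Tendsto (fun n => ((κ / 2 * ‖z n - y‖ ^ 2 : ℝ) : EReal)) atTop
        (𝓝 ((κ / 2 * ‖x - y‖ ^ 2 : ℝ) : EReal)) :=
      (continuous_coe_real_ereal.tendsto _).comp
        (((hz.sub_const y).norm.pow 2).const_mul (κ / 2))
    refine ⟨z, hz, ?_⟩
    calc _ ≤ limsup (fun n => F n (z n)) atTop
          + limsup (fun n => ((κ / 2 * ‖z n - y‖ ^ 2 : ℝ) : EReal)) atTop := by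
          refine EReal.limsup_add_le (.inr ?_) (.inr ?_)
          all_goals rw [hq.limsup_eq]
          exacts [EReal.coe_ne_top _, EReal.coe_ne_bot _]
      _ ≤ proxObjective κ y f x := by
          rw [hq.limsup_eq]
          exact add_le_add_left hlimsup _
  · intro x x₀ hx
    have hr : Tendsto (fun n => κ / 2 * ‖x₀ - y‖ ^ 2 + κ * (⟪x n, x₀ - y⟫ - ⟪x₀, x₀ - y⟫)) atTop
        (𝓝 (κ / 2 * ‖x₀ - y‖ ^ 2)) := by
      simpa using
        (((hx (x₀ - y)).sub_const ⟪x₀, x₀ - y⟫).const_mul κ).const_add (κ / 2 * ‖x₀ - y‖ ^ 2)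
    refine add_coe_le_liminf (hM.2 x x₀ hx) hr fun n => add_le_add_right (EReal.coe_le_coe ?_) _
    have hsq := norm_add_sq_real (x₀ - y) (x n - x₀)
    rw [sub_add_sub_cancel', real_inner_comm, inner_sub_left] at hsq
    nlinarith [mul_nonneg hκ (sq_nonneg ‖x n - x₀‖)]

theorem Mosco.tendsto_resolvent [CompleteSpace E] (hM : Mosco F f) (hF : ∀ n x, F n x ≠ ⊥)
    (hf : ∀ x, f x ≠ ⊥) (hτ : 0 < τ) (hlamτ : 0 < 1 + lam * τ) {z q : ℕ → E} {C : ℝ}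
    (hz : ∀ n, ‖z n‖ ≤ C) (hq : ∀ n, ‖q n‖ ≤ C) (hzq : ∀ n, q n ∈ subdiff lam (F n) (z n))
    {w y p : E} {Y P : ℕ → E} (hy : ResolventStep lam f τ w y p)
    (hY : ∀ n, ResolventStep lam (F n) τ w (Y n) (P n)) : Tendsto Y atTop (𝓝 y) := by
  have hpos : 0 < lam + τ⁻¹ := by
    refine pos_of_mul_pos_left ?_ hτ.le
    rwa [add_mul, inv_mul_cancel₀ hτ.ne', add_comm]
  have hbdd (n : ℕ) : ‖Y n‖ ≤ (1 + lam * τ)⁻¹ * (C + ‖w‖ + τ * C) + C := by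
    have hzz : ResolventStep lam (F n) 0 (z n) (z n) (q n) := ⟨hzq n, by simp⟩
    have h := hzz.mul_norm_sub_le (hF n) (hY n) hτ.le
    rw [zero_sub, abs_neg, abs_of_pos hτ, ← le_inv_mul_iff₀ hlamτ] at h
    have hYz := norm_sub_le (z n) (z n - Y n)
    rw [sub_sub_cancel] at hYz
    have hbound : ‖z n - w‖ + τ * ‖q n‖ ≤ C + ‖w‖ + τ * C := by
      gcongr
      exacts [(norm_sub_le _ _).trans (by gcongr; exact hz n), hq n]
    have := mul_le_mul_of_nonneg_left hbound (inv_nonneg.2 hlamτ.le)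
    linarith [hz n]
  refine (hM.mosco_proxObjective (inv_nonneg.2 hτ.le) w).tendsto_of_zero_mem_subdiff hpos
    (fun x => proxObjective_ne_bot (hf x))
    ((resolventStep_iff_zero_mem_subdiff_proxObjective hτ).1 (hy.inv_smul_sub hτ.ne')) hbdd
    fun n => (resolventStep_iff_zero_mem_subdiff_proxObjective hτ).1 ((hY n).inv_smul_sub hτ.ne')

end MoscoConvergence

section KineticEnergy

variable {E : Type*} [NormedAddCommGroup E]

theorem lintegral_enorm_sq_eq_eLpNorm_sq {α : Type*} [MeasurableSpace α] {μ : Measure α}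
    (u : α → E) : ∫⁻ t, ‖u t‖ₑ ^ 2 ∂μ = eLpNorm u 2 μ ^ 2 := by
  simpa using (eLpNorm_nnreal_pow_eq_lintegral (f := u) (μ := μ) (p := 2) two_ne_zero).symm

variable [InnerProductSpace ℝ E] {a b : ℝ} {γ u v : ℝ → E}

/-- `u` is a velocity of `γ` on `[a, b]`, so that `IsACCurve a b γ` says that some velocity
exists. -/
structure HasVelocityOn (a b : ℝ) (γ u : ℝ → E) : Prop where
  integrableOn : IntegrableOn u (Icc a b)
  eq_add_integral : ∀ t ∈ Icc a b, γ t = γ a + ∫ s in a..t, u s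

/-- The kinetic energy `∫ ‖γ̇‖²` of `γ` on `[a, b]`. The infimum is over the essentially unique
velocity, so that the value is `⊤` when `γ` is not absolutely continuous. -/
def kineticEnergy (a b : ℝ) (γ : ℝ → E) : ℝ≥0∞ :=
  ⨅ (u : ℝ → E) (_ : HasVelocityOn a b γ u), ∫⁻ t in Ioc a b, ‖u t‖ₑ ^ 2

theorem HasVelocityOn.ae_eq [CompleteSpace E] (hab : a ≤ b) (hu : HasVelocityOn a b γ u)
    (hv : HasVelocityOn a b γ v) : u =ᵐ[volume.restrict (Ioc a b)] v := by
  have hu' := (intervalIntegrable_iff_integrableOn_Icc_of_le hab).2 hu.integrableOn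
  have hv' := (intervalIntegrable_iff_integrableOn_Icc_of_le hab).2 hv.integrableOn
  rw [Filter.EventuallyEq, ae_restrict_iff' measurableSet_Ioc]
  filter_upwards [hu'.ae_hasDerivAt_integral, hv'.ae_hasDerivAt_integral, volume.ae_ne b]
    with x hux hvx hxb hx
  have hxI : x ∈ uIcc a b := uIcc_of_le hab ▸ Ioc_subset_Icc_self hx
  refine (hux hxI a left_mem_uIcc).unique ((hvx hxI a left_mem_uIcc).congr_of_eventuallyEq ?_)
  filter_upwards [Ioo_mem_nhds hx.1 (hx.2.lt_of_ne hxb)] with t ht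
  have ht' := Ioo_subset_Icc_self ht
  exact add_left_cancel ((hu.eq_add_integral t ht').symm.trans (hv.eq_add_integral t ht'))

theorem HasVelocityOn.kineticEnergy_eq [CompleteSpace E] (hab : a ≤ b)
    (hu : HasVelocityOn a b γ u) : kineticEnergy a b γ = ∫⁻ t in Ioc a b, ‖u t‖ₑ ^ 2 := by
  refine le_antisymm (iInf₂_le u hu) (le_iInf₂ fun v hv => (lintegral_congr_ae ?_).le)
  filter_upwards [hu.ae_eq hab hv] with t ht
  rw [ht]

theorem actionFn_eq [CompleteSpace E] (lam : ℝ) (f : E → EReal) (hab : a ≤ b) (γ : ℝ → E) :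
    actionFn lam f a b γ = kineticEnergy a b γ + ∫⁻ t in Ioc a b, gradNorm lam f (γ t) ^ 2 := by
  by_cases h : IsACCurve a b γ
  · have hvel : HasVelocityOn a b γ h.choose := ⟨h.choose_spec.1, h.choose_spec.2⟩
    have hmeas : AEMeasurable (fun t => ‖h.choose t‖ₑ ^ 2) (volume.restrict (Ioc a b)) :=
      (hvel.integrableOn.mono_set Ioc_subset_Icc_self).aestronglyMeasurable.enorm.pow_const 2
    rw [actionFn, dif_pos h, hvel.kineticEnergy_eq hab, ← lintegral_add_left' hmeas]
    simp only [ENNReal.ofReal_pow (norm_nonneg _), ofReal_norm]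
  · have htop : kineticEnergy a b γ = ⊤ :=
      iInf₂_eq_top.2 fun u hu => absurd ⟨u, hu.integrableOn, hu.eq_add_integral⟩ h
    rw [actionFn, dif_neg h, htop, top_add]

theorem WeakTendsto.tendsto_inner_intervalIntegral [CompleteSpace E]
    {U : ℕ → Lp E 2 (volume.restrict (Ioc a b))} {V : Lp E 2 (volume.restrict (Ioc a b))}
    (hU : WeakTendsto U V) {t : ℝ} (ht : t ∈ Icc a b) (w : E) :
    Tendsto (fun n => ⟪∫ s in a..t, U n s, w⟫) atTop (𝓝 ⟪∫ s in a..t, V s, w⟫) := by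
  have hinner (W : Lp E 2 (volume.restrict (Ioc a b))) : ⟪∫ s in a..t, W s, w⟫ =
      ⟪W, indicatorConstLp 2 measurableSet_Ioc (measure_ne_top _ (Ioc a t)) w⟫ := by
    rw [real_inner_comm, real_inner_comm _ W, L2.inner_indicatorConstLp_eq_inner_setIntegral,
      Measure.restrict_restrict measurableSet_Ioc, inter_eq_left.2 (Ioc_subset_Ioc_right ht.2),
      intervalIntegral.integral_of_le ht.1]
  simpa only [hinner] using hU _

theorem kineticEnergy_le_of_tendsto [CompleteSpace E] (hab : a ≤ b) {γs : ℕ → ℝ → E} {C : ℝ≥0∞}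
    (hlim : ∀ t ∈ Icc a b, Tendsto (fun n => γs n t) atTop (𝓝 (γ t)))
    (hC : ∀ n, kineticEnergy a b (γs n) < C) : kineticEnergy a b γ ≤ C := by
  rcases eq_or_ne C ⊤ with rfl | hC_top
  · exact le_top
  set μ := volume.restrict (Ioc a b)
  simp only [kineticEnergy, iInf_lt_iff] at hC
  choose u hu huC using hC
  have hmem (n : ℕ) : MemLp (u n) 2 μ := by
    refine ⟨((hu n).integrableOn.mono_set Ioc_subset_Icc_self).aestronglyMeasurable, ?_⟩
    have h := (huC n).trans_le le_top
    rwa [lintegral_enorm_sq_eq_eLpNorm_sq, ENNReal.pow_lt_top_iff, or_iff_left two_ne_zero] at h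
  have hnorm (n : ℕ) : ‖(hmem n).toLp‖ ≤ √C.toReal := by
    refine Real.le_sqrt_of_sq_le ?_
    rw [Lp.norm_toLp, ← ENNReal.toReal_pow, ← lintegral_enorm_sq_eq_eLpNorm_sq]
    exact ENNReal.toReal_mono hC_top (huC n).le
  obtain ⟨U, φ, hφ, hU⟩ := exists_subseq_weakTendsto hnorm
  have hUnorm : ∫⁻ t, ‖U t‖ₑ ^ 2 ∂μ ≤ C := by
    have h := hU.norm_le_of_eventually_le (.of_forall fun n => hnorm (φ n))
    rw [lintegral_enorm_sq_eq_eLpNorm_sq, ← Lp.enorm_def, ← ofReal_norm,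
      ← ENNReal.ofReal_pow (norm_nonneg _)]
    exact ENNReal.ofReal_le_of_le_toReal ((Real.le_sqrt (norm_nonneg _) ENNReal.toReal_nonneg).1 h)
  refine (iInf₂_le (U : ℝ → E) ⟨?_, fun t ht => ?_⟩).trans hUnorm
  · rw [integrableOn_Icc_iff_integrableOn_Ioc]
    exact (Lp.memLp U).integrable one_le_two
  · rw [← sub_eq_iff_eq_add']
    have hφ' := hφ.tendsto_atTop
    have hlim' := ((hlim t ht).comp hφ').sub ((hlim a (left_mem_Icc.2 hab)).comp hφ')
    refine ext_inner_right ℝ fun w =>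
      tendsto_nhds_unique (hlim'.inner tendsto_const_nhds) ?_
    refine (hU.tendsto_inner_intervalIntegral ht w).congr fun n => ?_
    have hcongr : ∫ s in a..t, (hmem (φ n)).toLp (u (φ n)) s = ∫ s in a..t, u (φ n) s := by
      refine intervalIntegral.integral_congr_ae_restrict ?_
      rw [uIoc_of_le ht.1]
      exact ae_restrict_of_ae_restrict_of_subset (Ioc_subset_Ioc_right ht.2)
        (hmem (φ n)).coeFn_toLp
    simp only [Function.comp_apply, (hu (φ n)).eq_add_integral t ht, add_sub_cancel_left, hcongr]

theorem kineticEnergy_le_liminf [CompleteSpace E] (hab : a ≤ b) {γs : ℕ → ℝ → E}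
    (hlim : ∀ t ∈ Icc a b, Tendsto (fun n => γs n t) atTop (𝓝 (γ t))) :
    kineticEnergy a b γ ≤ liminf (fun n => kineticEnergy a b (γs n)) atTop := by
  refine le_of_forall_gt_imp_ge_of_dense fun c hc => ?_
  obtain ⟨φ, hφ, hlt⟩ :=
    extraction_of_frequently_atTop (frequently_lt_of_liminf_lt (by isBoundedDefault) hc)
  exact kineticEnergy_le_of_tendsto hab (fun t ht => (hlim t ht).comp hφ.tendsto_atTop) hlt

end KineticEnergy

section SpeedBound

variable {E : Type*} [NormedAddCommGroup E] {m m' : ℝ → ℝ≥0∞} {c c' : ℝ → E} {a b d k : ℝ}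

/-- `m` dominates the metric speed of `c`, in integrated form. -/
def IsSpeedBound (m : ℝ → ℝ≥0∞) (c : ℝ → E) : Prop :=
  ∀ ⦃s t : ℝ⦄, s ≤ t → ‖c t - c s‖ₑ ≤ ∫⁻ r in Ioc s t, m r

theorem sq_lintegral_le {α : Type*} [MeasurableSpace α] {μ : Measure α} {g : α → ℝ≥0∞}
    (hg : AEMeasurable g μ) : (∫⁻ x, g x ∂μ) ^ 2 ≤ μ univ * ∫⁻ x, g x ^ 2 ∂μ := by
  have h := ENNReal.lintegral_mul_le_Lp_mul_Lq μ Real.HolderConjugate.two_two hg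
    (aemeasurable_const (b := 1))
  simp only [Pi.mul_apply, mul_one, lintegral_const, one_mul, ENNReal.rpow_ofNat, one_pow] at h
  calc (∫⁻ x, g x ∂μ) ^ 2
      ≤ ((∫⁻ x, g x ^ 2 ∂μ) ^ (1 / 2 : ℝ) * μ univ ^ (1 / 2 : ℝ)) ^ 2 := by gcongr
    _ = μ univ * ∫⁻ x, g x ^ 2 ∂μ := by
      rw [mul_pow, ← ENNReal.rpow_mul_natCast, ← ENNReal.rpow_mul_natCast]
      norm_num [mul_comm]

theorem lintegral_comp_affine (F : ℝ → ℝ≥0∞) (hk : 0 < k) (b : ℝ) :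
    ∫⁻ t, F (k * t + b) = ENNReal.ofReal k⁻¹ * ∫⁻ u, F u := by
  rw [← (measurableEmbedding_mulLeft₀ hk.ne').lintegral_map (fun u => F (u + b)),
    Real.map_volume_mul_left hk.ne', lintegral_smul_measure, abs_of_pos (inv_pos.2 hk),
    lintegral_add_right_eq_self F, smul_eq_mul]

theorem setLIntegral_comp_affine (F : ℝ → ℝ≥0∞) (hk : 0 < k) (b s t : ℝ) :
    ∫⁻ r in Ioc s t, F (k * r + b) =
      ENNReal.ofReal k⁻¹ * ∫⁻ u in Ioc (k * s + b) (k * t + b), F u := by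
  have hind (r : ℝ) : (Ioc (k * s + b) (k * t + b)).indicator F (k * r + b) =
      (Ioc s t).indicator (fun r => F (k * r + b)) r := by
    simp only [indicator, mem_Ioc, add_lt_add_iff_right, add_le_add_iff_right,
      mul_lt_mul_iff_right₀ hk, mul_le_mul_iff_right₀ hk]
  simpa only [hind, lintegral_indicator measurableSet_Ioc]
    using lintegral_comp_affine ((Ioc (k * s + b) (k * t + b)).indicator F) hk b

namespace IsSpeedBound

theorem add (hm : Measurable m) (hc : IsSpeedBound m c) (hc' : IsSpeedBound m' c') :
    IsSpeedBound (fun r => m r + m' r) (fun r => c r + c' r) := fun s t hst => by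
  rw [lintegral_add_left hm, add_sub_add_comm]
  exact (enorm_add_le _ _).trans (add_le_add (hc hst) (hc' hst))

theorem comp_affine (hc : IsSpeedBound m c) (hk : 0 < k) (b : ℝ) :
    IsSpeedBound (fun r => ENNReal.ofReal k * m (k * r + b)) fun r => c (k * r + b) :=
  fun s t hst => by
  rw [lintegral_const_mul' _ _ ENNReal.ofReal_ne_top, setLIntegral_comp_affine m hk, ← mul_assoc,
    ← ENNReal.ofReal_mul hk.le, mul_inv_cancel₀ hk.ne', ENNReal.ofReal_one, one_mul]
  exact hc (by gcongr)

theorem enorm_sub_sq_le (hc : IsSpeedBound m c) (hm : Measurable m) {s t : ℝ} (hst : s ≤ t) :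
    ‖c t - c s‖ₑ ^ 2 ≤ ENNReal.ofReal (t - s) * ∫⁻ r in Ioc s t, m r ^ 2 :=
  calc ‖c t - c s‖ₑ ^ 2 ≤ (∫⁻ r in Ioc s t, m r) ^ 2 := by gcongr; exact hc hst
    _ ≤ volume.restrict (Ioc s t) univ * ∫⁻ r in Ioc s t, m r ^ 2 :=
      sq_lintegral_le hm.aemeasurable
    _ = ENNReal.ofReal (t - s) * ∫⁻ r in Ioc s t, m r ^ 2 := by
      rw [Measure.restrict_apply_univ, Real.volume_Ioc]

theorem holderWith (hc : IsSpeedBound m c) (hm : Measurable m) (hfin : ∫⁻ r, m r ^ 2 ≠ ⊤) :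
    HolderWith ((∫⁻ r, m r ^ 2).toNNReal ^ (1 / 2 : ℝ)) (1 / 2) c := fun s t => by
  wlog hst : s ≤ t generalizing s t
  · rw [edist_comm, edist_comm s]
    exact this t s (le_of_not_ge hst)
  have hroot : (‖c t - c s‖ₑ ^ 2) ^ (1 / 2 : ℝ) = ‖c t - c s‖ₑ := by
    rw [← ENNReal.rpow_natCast_mul]
    norm_num
  rw [edist_comm, edist_comm s, edist_eq_enorm_sub, edist_eq_enorm_sub t,
    Real.enorm_of_nonneg (sub_nonneg.2 hst), ENNReal.coe_rpow_of_nonneg _ one_half_pos.le,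
    ENNReal.coe_toNNReal hfin]
  calc ‖c t - c s‖ₑ = (‖c t - c s‖ₑ ^ 2) ^ (1 / 2 : ℝ) := hroot.symm
    _ ≤ (ENNReal.ofReal (t - s) * ∫⁻ r, m r ^ 2) ^ (1 / 2 : ℝ) := by
      gcongr
      exact (hc.enorm_sub_sq_le hm hst).trans (by gcongr; exact Measure.restrict_le_self)
    _ = (∫⁻ r, m r ^ 2) ^ (1 / 2 : ℝ) * ENNReal.ofReal (t - s) ^ ((1 / 2 : NNReal) : ℝ) := by
      rw [ENNReal.mul_rpow_of_nonneg _ _ one_half_pos.le, mul_comm]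
      norm_num

theorem uniformContinuous (hc : IsSpeedBound m c) (hm : Measurable m)
    (hfin : ∫⁻ r, m r ^ 2 ≠ ⊤) : UniformContinuous c :=
  (hc.holderWith hm hfin).uniformContinuous one_half_pos

theorem lintegral_enorm_sub_sq_le (hc : IsSpeedBound m c) (hm : Measurable m) (hd : 0 ≤ d) :
    ∫⁻ t, ‖c (t + d) - c t‖ₑ ^ 2 ≤ ENNReal.ofReal d ^ 2 * ∫⁻ r, m r ^ 2 := by
  have hpt (t : ℝ) : ‖c (t + d) - c t‖ₑ ^ 2
      ≤ ENNReal.ofReal d * ∫⁻ r in Ioc 0 d, m (t + r) ^ 2 := by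
    have h := hc.enorm_sub_sq_le hm (le_add_of_nonneg_right hd : t ≤ t + d)
    have hshift := (measurePreserving_add_left volume t).setLIntegral_comp_preimage
      (s := Ioc t (t + d)) measurableSet_Ioc (hm.pow_const 2)
    rw [preimage_const_add_Ioc, sub_self, add_sub_cancel_left] at hshift
    rwa [add_sub_cancel_left, ← hshift] at h
  calc ∫⁻ t, ‖c (t + d) - c t‖ₑ ^ 2
      ≤ ∫⁻ t, ENNReal.ofReal d * ∫⁻ r in Ioc 0 d, m (t + r) ^ 2 := lintegral_mono hpt
    _ = ENNReal.ofReal d * ∫⁻ r in Ioc 0 d, ∫⁻ t, m (t + r) ^ 2 := by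
      rw [lintegral_const_mul' _ _ ENNReal.ofReal_ne_top, lintegral_lintegral_swap]
      exact ((hm.comp measurable_add).pow_const 2).aemeasurable
    _ = ENNReal.ofReal d ^ 2 * ∫⁻ r, m r ^ 2 := by
      simp only [lintegral_add_right_eq_self (fun t => m t ^ 2), setLIntegral_const,
        Real.volume_Ioc, sub_zero]
      ring

end IsSpeedBound

theorem isSpeedBound_comp_projIcc (hab : a ≤ b)
    (h : ∀ s ∈ Icc a b, ∀ t ∈ Icc a b, s ≤ t → ‖c t - c s‖ₑ ≤ ∫⁻ r in Ioc s t, m r) :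
    IsSpeedBound ((Ioc a b).indicator m) (fun t => c (projIcc a b hab t)) := fun s t hst => by
  have hsub : Ioc (projIcc a b hab s : ℝ) (projIcc a b hab t) ⊆ Ioc s t ∩ Ioc a b := by
    rintro r ⟨hsr, hrt⟩
    simp only [coe_projIcc, max_lt_iff, le_max_iff, min_lt_iff, le_min_iff] at hsr hrt
    have hr := hrt.resolve_left hsr.1.not_ge
    exact ⟨⟨hsr.2.resolve_left hr.1.not_gt, hr.2⟩, hsr.1, hr.1⟩
  calc ‖c (projIcc a b hab t) - c (projIcc a b hab s)‖ₑ
      ≤ ∫⁻ r in Ioc (projIcc a b hab s : ℝ) (projIcc a b hab t), m r :=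
        h _ (Subtype.coe_prop _) _ (Subtype.coe_prop _) (monotone_projIcc hab hst)
    _ ≤ ∫⁻ r in Ioc s t ∩ Ioc a b, m r := lintegral_mono_set hsub
    _ = ∫⁻ r in Ioc s t, (Ioc a b).indicator m r := by
      rw [lintegral_indicator measurableSet_Ioc, Measure.restrict_restrict measurableSet_Ioc,
        inter_comm]

variable [InnerProductSpace ℝ E] [CompleteSpace E]

theorem hasVelocityOn_slope_integral (hc : Continuous c) (a b d : ℝ) :
    HasVelocityOn a b (fun t => d⁻¹ • ((∫ r in 0..t + d, c r) - ∫ r in 0..t, c r))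
      fun t => d⁻¹ • (c (t + d) - c t) := by
  have hcont : Continuous fun t => d⁻¹ • (c (t + d) - c t) := by fun_prop
  refine ⟨hcont.continuousOn.integrableOn_Icc, fun t _ => ?_⟩
  have hderiv (t : ℝ) : HasDerivAt (fun t => d⁻¹ • ((∫ r in 0..t + d, c r) - ∫ r in 0..t, c r))
      (d⁻¹ • (c (t + d) - c t)) t :=
    (((hc.integral_hasStrictDerivAt 0 (t + d)).hasDerivAt.comp_add_const t d).sub
      (hc.integral_hasStrictDerivAt 0 t).hasDerivAt).const_smul d⁻¹
  rw [intervalIntegral.integral_eq_sub_of_hasDerivAt (fun t _ => hderiv t)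
    (hcont.intervalIntegrable a t), add_sub_cancel]

theorem IsSpeedBound.kineticEnergy_le (hc : IsSpeedBound m c) (hm : Measurable m) (hab : a ≤ b) :
    kineticEnergy a b c ≤ ∫⁻ r, m r ^ 2 := by
  rcases eq_or_ne (∫⁻ r, m r ^ 2) ⊤ with h | hfin
  · exact h ▸ le_top
  have hcont := (hc.uniformContinuous hm hfin).continuous
  have hd (n : ℕ) : (0 : ℝ) < 1 / (n + 1) := Nat.one_div_pos_of_nat
  have hlim (t : ℝ) : Tendsto (fun n : ℕ => ((1 : ℝ) / (n + 1))⁻¹ •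
      ((∫ r in 0..t + 1 / (n + 1), c r) - ∫ r in 0..t, c r)) atTop (𝓝 (c t)) :=
    (hcont.integral_hasStrictDerivAt 0 t).hasDerivAt.tendsto_slope_zero.comp
      (tendsto_nhdsWithin_iff.2
        ⟨tendsto_one_div_add_atTop_nhds_zero_nat, .of_forall fun n => (hd n).ne'⟩)
  refine (kineticEnergy_le_liminf hab fun t _ => hlim t).trans
    (liminf_le_of_le (by isBoundedDefault) fun C hC => ?_)
  obtain ⟨n, hn⟩ := hC.exists
  have hne : ENNReal.ofReal (1 / (n + 1)) ≠ 0 := (ENNReal.ofReal_pos.2 (hd n)).ne'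
  calc C ≤ ∫⁻ t in Ioc a b, ‖((1 : ℝ) / (n + 1))⁻¹ • (c (t + 1 / (n + 1)) - c t)‖ₑ ^ 2 :=
        hn.trans_eq ((hasVelocityOn_slope_integral hcont a b _).kineticEnergy_eq hab)
    _ ≤ ∫⁻ t, ‖((1 : ℝ) / (n + 1))⁻¹ • (c (t + 1 / (n + 1)) - c t)‖ₑ ^ 2 :=
        setLIntegral_le_lintegral _ _
    _ = (ENNReal.ofReal (1 / (n + 1)))⁻¹ ^ 2 * ∫⁻ t, ‖c (t + 1 / (n + 1)) - c t‖ₑ ^ 2 := by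
        simp only [enorm_smul, mul_pow]
        rw [lintegral_const_mul' _ _ (by simp), Real.enorm_of_nonneg (inv_pos.2 (hd n)).le,
          ENNReal.ofReal_inv_of_pos (hd n)]
    _ ≤ (ENNReal.ofReal (1 / (n + 1)))⁻¹ ^ 2 *
          (ENNReal.ofReal (1 / (n + 1)) ^ 2 * ∫⁻ r, m r ^ 2) := by
        gcongr
        exact hc.lintegral_enorm_sub_sq_le hm (hd n).le
    _ = ∫⁻ r, m r ^ 2 := by
        rw [← mul_assoc, ← mul_pow, ENNReal.inv_mul_cancel hne ENNReal.ofReal_ne_top, one_pow,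
          one_mul]

theorem exists_isSpeedBound (hab : a ≤ b) (h : kineticEnergy a b c ≠ ⊤) :
    ∃ m, Measurable m ∧ IsSpeedBound m (IccExtend hab ((Icc a b).domRestrict c)) ∧
      (∀ r ∉ Ioc a b, m r = 0) ∧ ∫⁻ r, m r ^ 2 = kineticEnergy a b c := by
  obtain ⟨u, hu⟩ : ∃ u, HasVelocityOn a b c u := by
    by_contra! hno
    exact h (iInf₂_eq_top.2 fun u hu => absurd hu (hno u))
  obtain ⟨v, hv, huv⟩ := (hu.integrableOn.mono_set Ioc_subset_Icc_self).aestronglyMeasurable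
  have henorm : (fun t => ‖u t‖ₑ) =ᵐ[volume.restrict (Ioc a b)] fun t => ‖v t‖ₑ :=
    huv.fun_comp (‖·‖ₑ)
  refine ⟨(Ioc a b).indicator (‖v ·‖ₑ), hv.enorm.indicator measurableSet_Ioc,
    isSpeedBound_comp_projIcc hab fun s hs t ht hst => ?_,
    fun r hr => indicator_of_notMem hr _, ?_⟩
  · have hint (x : ℝ) (hx : x ∈ Icc a b) : IntervalIntegrable u volume a x :=
      (intervalIntegrable_iff_integrableOn_Icc_of_le hx.1).2
        (hu.integrableOn.mono_set (Icc_subset_Icc_right hx.2))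
    rw [hu.eq_add_integral t ht, hu.eq_add_integral s hs, add_sub_add_left_eq_sub,
      intervalIntegral.integral_interval_sub_left (hint t ht) (hint s hs),
      intervalIntegral.integral_of_le hst]
    exact (enorm_integral_le_lintegral_enorm _).trans_eq (lintegral_congr_ae
      (ae_restrict_of_ae_restrict_of_subset (Ioc_subset_Ioc hs.1 ht.2) henorm))
  · have hsq : (fun t => ‖u t‖ₑ ^ 2) =ᵐ[volume.restrict (Ioc a b)] fun t => ‖v t‖ₑ ^ 2 :=
      henorm.fun_comp (· ^ 2)
    rw [hu.kineticEnergy_eq hab, lintegral_congr_ae hsq, ← lintegral_indicator measurableSet_Ioc]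
    refine lintegral_congr fun r => ?_
    by_cases hr : r ∈ Ioc a b <;> simp [hr]

end SpeedBound

section LowerBound

theorem liminf_add_liminf_le (u v : ℕ → ℝ≥0∞) :
    liminf u atTop + liminf v atTop ≤ liminf (fun n => u n + v n) atTop := by
  have hmono (w : ℕ → ℝ≥0∞) : Monotone fun n => ⨅ i ≥ n, w i :=
    fun _ _ hmn => biInf_mono fun _ hi => hmn.trans hi
  simp only [liminf_eq_iSup_iInf_of_nat]
  rw [ENNReal.iSup_add_iSup_of_monotone (hmono u) (hmono v)]
  exact iSup_mono fun n => le_iInf₂ fun i hi => add_le_add (iInf₂_le i hi) (iInf₂_le i hi)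

variable {E : Type*} [NormedAddCommGroup E] [InnerProductSpace ℝ E] {lam a b : ℝ}
  {F : ℕ → E → EReal} {f : E → EReal} {γs : ℕ → ℝ → E} {γ : ℝ → E}

theorem aemeasurable_gradNorm_comp [CompleteSpace E] (hf : ∃ z, f z ≠ ⊤)
    (hl : LowerSemicontinuous f) (hab : a ≤ b) (hγ : ContinuousOn γ (Icc a b)) :
    AEMeasurable (fun t => gradNorm lam f (γ t)) (volume.restrict (Ioc a b)) := by
  have hc : Continuous fun t => γ (projIcc a b hab t) :=
    (continuousOn_iff_continuous_domRestrict.1 hγ).Icc_extend'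
  have hmeas := ((lowerSemicontinuous_gradNorm (lam := lam) hf hl).comp hc).measurable
  refine hmeas.aemeasurable.congr ?_
  filter_upwards [ae_restrict_mem measurableSet_Ioc] with t ht
  rw [Function.comp_apply, projIcc_of_mem hab (Ioc_subset_Icc_self ht)]

theorem Mosco.lintegral_gradNorm_sq_le_liminf [CompleteSpace E] (hM : Mosco F f)
    (hF : ∀ n, ∃ z, F n z ≠ ⊤) (hFl : ∀ n, LowerSemicontinuous (F n)) (hf : ∃ z, f z ≠ ⊤)
    (hab : a ≤ b) (hγs : ∀ n, ContinuousOn (γs n) (Icc a b))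
    (hlim : ∀ t ∈ Icc a b, Tendsto (fun n => γs n t) atTop (𝓝 (γ t))) :
    ∫⁻ t in Ioc a b, gradNorm lam f (γ t) ^ 2 ≤
      liminf (fun n => ∫⁻ t in Ioc a b, gradNorm lam (F n) (γs n t) ^ 2) atTop := by
  refine le_trans (setLIntegral_mono' measurableSet_Ioc fun t ht => ?_) (lintegral_liminf_le'
    fun n => (aemeasurable_gradNorm_comp (hF n) (hFl n) hab (hγs n)).pow_const 2)
  have ht := hlim t (Ioc_subset_Icc_self ht)
  calc gradNorm lam f (γ t) ^ 2
      ≤ liminf (fun n => gradNorm lam (F n) (γs n t)) atTop ^ 2 := by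
        gcongr
        exact gradNorm_le_liminf hf hM.hasRecoverySeq ht (hM.le_liminf_of_tendsto ht)
    _ = liminf (fun n => gradNorm lam (F n) (γs n t) ^ 2) atTop :=
        (pow_left_mono 2).map_liminf_of_continuousAt _ (ENNReal.continuous_pow 2).continuousAt

theorem Mosco.actionFn_le_liminf [CompleteSpace E] (hM : Mosco F f)
    (hF : ∀ n, ∃ z, F n z ≠ ⊤) (hFl : ∀ n, LowerSemicontinuous (F n)) (hf : ∃ z, f z ≠ ⊤)
    (hab : a ≤ b) (hγs : ∀ n, ContinuousOn (γs n) (Icc a b))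
    (hlim : ∀ t ∈ Icc a b, Tendsto (fun n => γs n t) atTop (𝓝 (γ t))) :
    actionFn lam f a b γ ≤ liminf (fun n => actionFn lam (F n) a b (γs n)) atTop := by
  simp only [actionFn_eq _ _ hab]
  refine (add_le_add (kineticEnergy_le_liminf hab hlim)
    (hM.lintegral_gradNorm_sq_le_liminf hF hFl hf hab hγs hlim)).trans ?_
  exact liminf_add_liminf_le _ _

theorem actionFn_le_theta (lam : ℝ) (f : E → EReal) (x₀ x₁ : E) (γ : ℝ → E) :
    actionFn lam f 0 1 γ ≤ Theta lam f x₀ x₁ γ := by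
  rw [Theta]
  split_ifs
  exacts [le_rfl, le_top]

theorem Mosco.theta_le_liminf [CompleteSpace E] (hM : Mosco F f)
    (hF : ∀ n, ∃ z, F n z ≠ ⊤) (hFl : ∀ n, LowerSemicontinuous (F n)) (hf : ∃ z, f z ≠ ⊤)
    {xs₀ xs₁ : ℕ → E} {x₀ x₁ : E} (hx₀ : Tendsto xs₀ atTop (𝓝 x₀))
    (hx₁ : Tendsto xs₁ atTop (𝓝 x₁)) (hγs : ∀ n, ContinuousOn (γs n) (Icc 0 1))
    (hlim : ∀ t ∈ Icc (0 : ℝ) 1, Tendsto (fun n => γs n t) atTop (𝓝 (γ t))) :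
    Theta lam f x₀ x₁ γ ≤ liminf (fun n => Theta lam (F n) (xs₀ n) (xs₁ n) (γs n)) atTop := by
  by_cases hends : γ 0 = x₀ ∧ γ 1 = x₁
  · rw [Theta, if_pos hends]
    exact (hM.actionFn_le_liminf hF hFl hf zero_le_one hγs hlim).trans
      (liminf_le_liminf (.of_forall fun n => actionFn_le_theta ..))
  · have hne : ∀ᶠ n in atTop, ¬(γs n 0 = xs₀ n ∧ γs n 1 = xs₁ n) :=
      not_frequently.1 fun h => hends
        ⟨tendsto_nhds_unique_of_frequently_eq (hlim 0 (by simp)) hx₀ (h.mono fun _ => And.left),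
          tendsto_nhds_unique_of_frequently_eq (hlim 1 (by simp)) hx₁ (h.mono fun _ => And.right)⟩
    refine le_top.trans (le_liminf_of_le (by isBoundedDefault) ?_)
    filter_upwards [hne] with n hn
    rw [Theta, if_neg hn]

end LowerBound

section UniformResolvent

theorem eventually_forall_mem_of_isCompact {ι X : Type*} [TopologicalSpace X] {l : Filter ι}
    {K : Set X} {P : ι → X → Prop} (hK : IsCompact K)
    (h : ∀ x ∈ K, ∀ᶠ w in l ×ˢ 𝓝 x, P w.1 w.2) : ∀ᶠ i in l, ∀ x ∈ K, P i x :=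
  have hprod : ∀ᶠ w in l ×ˢ 𝓝ˢ K, P w.1 w.2 := hK.mem_prod_nhdsSet_of_forall h
  hprod.curry.mono fun _ hi => hi.self_of_nhdsSet

variable {E : Type*} [NormedAddCommGroup E] [InnerProductSpace ℝ E] {lam τ σ κ ε : ℝ}
  {F : ℕ → E → EReal} {f : E → EReal} {K : Set E} {x y p x' y' p' : E}

theorem one_half_le_one_add_mul (hτ : 0 ≤ τ) (hlamτ : |lam| * τ ≤ 1 / 2) :
    1 / 2 ≤ 1 + lam * τ := by
  linarith [mul_le_mul_of_nonneg_right (neg_abs_le lam) hτ]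

namespace ResolventStep

theorem norm_sub_le_two_mul (hf : ∀ x, f x ≠ ⊥) (hy : ResolventStep lam f τ x y p)
    (hy' : ResolventStep lam f σ x' y' p') (hσ : 0 ≤ σ) (hlamσ : |lam| * σ ≤ 1 / 2) :
    ‖y - y'‖ ≤ 2 * (‖x - x'‖ + |τ - σ| * ‖p‖) := by
  have h := hy.mul_norm_sub_le hf hy' hσ
  have hle := mul_le_mul_of_nonneg_right (one_half_le_one_add_mul hσ hlamσ)
    (norm_nonneg (y - y'))
  linarith

theorem norm_sub_eq (hy : ResolventStep lam f τ x y p) (hτ : 0 ≤ τ) : ‖x - y‖ = τ * ‖p‖ := by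
  rw [← hy.add_smul_eq, add_sub_cancel_left, norm_smul, Real.norm_of_nonneg hτ]

theorem enorm_le_mul_gradNorm [CompleteSpace E] (hf : ∀ x, f x ≠ ⊥)
    (hy : ResolventStep lam f τ x y p) (hτ : 0 < τ) (hκ : 0 < κ) (hκτ : κ ≤ 1 + lam * τ) :
    ‖p‖ₑ ≤ ENNReal.ofReal κ⁻¹ * gradNorm lam f x := by
  rcases eq_or_ne (gradNorm lam f x) ⊤ with htop | hfin
  · rw [htop, ENNReal.mul_top (by simpa using hκ)]
    exact le_top
  obtain ⟨q, hq, hqx⟩ := exists_enorm_eq_gradNorm hfin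
  rw [← hqx, ← ofReal_norm, ← ofReal_norm, ← ENNReal.ofReal_mul (by positivity)]
  refine ENNReal.ofReal_le_ofReal ((le_inv_mul_iff₀ hκ).2 ?_)
  exact (mul_le_mul_of_nonneg_right hκτ (norm_nonneg p)).trans (hy.mul_norm_le hf hτ hq)

end ResolventStep

theorem eventually_forall_norm_resolvent_sub_le (hf : ∀ x, f x ≠ ⊥) (hK : IsCompact K)
    (hKf : K ⊆ closure {z | (subdiff lam f z).Nonempty}) (hε : 0 < ε) :
    ∀ᶠ τ : ℝ in 𝓝[>] 0, ∀ x ∈ K, ∀ y p, ResolventStep lam f τ x y p → ‖x - y‖ ≤ ε := by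
  refine eventually_forall_mem_of_isCompact hK fun x hx => ?_
  obtain ⟨z, ⟨q, hq⟩, hzx⟩ := Metric.mem_closure_iff.1 (hKf hx) (ε / 3) (by positivity)
  have hlim : Tendsto (fun w : ℝ × E => 3 * ‖w.2 - z‖ + 2 * w.1 * ‖q‖) (𝓝[>] 0 ×ˢ 𝓝 x)
      (𝓝 (3 * ‖x - z‖ + 2 * 0 * ‖q‖)) := by
    refine Tendsto.mono_left (Continuous.tendsto' (by fun_prop) (0, x) _ rfl) ?_
    rw [nhds_prod_eq]
    exact prod_mono nhdsWithin_le_nhds le_rfl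
  have hlam : ∀ᶠ τ : ℝ in 𝓝[>] 0, |lam| * τ < 1 / 2 :=
    ((Continuous.tendsto' (by fun_prop) 0 0 (by simp)).mono_left
      nhdsWithin_le_nhds).eventually_lt_const one_half_pos
  rw [dist_eq_norm] at hzx
  filter_upwards [hlim.eventually_lt_const (by linarith : _ < ε), hlam.prod_inl _,
    (eventually_mem_nhdsWithin (a := (0 : ℝ)) (s := Ioi 0)).prod_inl _] with w hwε hwlam hw y p hy
  have hz : ResolventStep lam f 0 z z q := ⟨hq, by simp⟩
  have hzy := hz.norm_sub_le_two_mul hf hy hw.le hwlam.le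
  rw [zero_sub, abs_neg, abs_of_pos hw, norm_sub_rev z w.2] at hzy
  linarith [norm_sub_le_norm_sub_add_norm_sub w.2 z y]

theorem image_subset_closure_of_lintegral_ne_top [CompleteSpace E] (hf : ∃ z, f z ≠ ⊤)
    (hl : LowerSemicontinuous f) {a b : ℝ} (hab : a < b) {γ : ℝ → E}
    (hγ : ContinuousOn γ (Icc a b)) (hfin : ∫⁻ t in Ioc a b, gradNorm lam f (γ t) ^ 2 ≠ ⊤) :
    γ '' Icc a b ⊆ closure {z | (subdiff lam f z).Nonempty} := by
  have hae := ae_lt_top' ((aemeasurable_gradNorm_comp hf hl hab.le hγ).pow_const 2) hfin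
  rw [ae_restrict_iff' measurableSet_Ioc] at hae
  have hIcc : Icc a b ⊆ closure (Ioo a b ∩ {t | t ∈ Ioc a b → gradNorm lam f (γ t) ^ 2 < ⊤}) := by
    rw [← closure_Ioo hab.ne]
    exact closure_minimal ((Measure.dense_of_ae hae).open_subset_closure_inter isOpen_Ioo)
      isClosed_closure
  rintro _ ⟨t, ht, rfl⟩
  refine closure_mono ?_ (((hγ t ht).mono (inter_subset_left.trans
    Ioo_subset_Icc_self)).mem_closure_image (hIcc ht))
  rintro _ ⟨s, ⟨hs, hfin_s⟩, rfl⟩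
  by_contra hempty
  have htop : gradNorm lam f (γ s) = ⊤ := if_neg hempty
  simpa [htop] using hfin_s (Ioo_subset_Ioc_self hs)

theorem Mosco.eventually_forall_norm_resolvent_sub_resolvent_le [CompleteSpace E] (hM : Mosco F f)
    (hF : ∀ n x, F n x ≠ ⊥) (hFc : ∀ n, LambdaConvex lam (F n))
    (hFl : ∀ n, LowerSemicontinuous (F n)) (hf : ∀ x, f x ≠ ⊥) {z q : ℕ → E} {C : ℝ}
    (hz : ∀ n, ‖z n‖ ≤ C) (hq : ∀ n, ‖q n‖ ≤ C) (hzq : ∀ n, q n ∈ subdiff lam (F n) (z n))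
    (hτ : 0 < τ) (hlamτ : |lam| * τ ≤ 1 / 2) (hK : IsCompact K)
    (hKf : ∀ x ∈ K, ∃ y p, ResolventStep lam f τ x y p) (hε : 0 < ε) :
    ∀ᶠ n in atTop, ∀ x ∈ K, ∀ x' y p y' p', ‖x' - x‖ ≤ ε → ResolventStep lam f τ x y p →
      ResolventStep lam (F n) τ x' y' p' → ‖y' - y‖ ≤ 3 * ε := by
  refine eventually_forall_mem_of_isCompact hK fun x hx => ?_
  have hlamτ₀ : 0 < 1 + lam * τ := one_half_pos.trans_le (one_half_le_one_add_mul hτ.le hlamτ)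
  obtain ⟨y₀, p₀, hy₀⟩ := hKf x hx
  choose Y P hY using fun n => (hFc n).exists_resolventStep (hF n) (hFl n) (hzq n) hτ hlamτ₀ x
  have hYlim := hM.tendsto_resolvent hF hf hτ hlamτ₀ hz hq hzq hy₀ hY
  have hlim : Tendsto (fun w : ℕ × E => 4 * ‖w.2 - x‖ + ‖Y w.1 - y₀‖) (atTop ×ˢ 𝓝 x) (𝓝 0) := by
    have hx : Tendsto (fun w : ℕ × E => w.2) (atTop ×ˢ 𝓝 x) (𝓝 x) := tendsto_snd
    have hY : Tendsto (fun w : ℕ × E => Y w.1) (atTop ×ˢ 𝓝 x) (𝓝 y₀) := hYlim.comp tendsto_fst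
    simpa using ((hx.sub_const x).norm.const_mul 4).add (hY.sub_const y₀).norm
  filter_upwards [hlim.eventually_lt_const hε] with w hw x' y p y' p' hx' hy hy'
  have hy'Y := hy'.norm_sub_le_two_mul (hF w.1) (hY w.1) hτ.le hlamτ
  have hy₀y := hy₀.norm_sub_le_two_mul hf hy hτ.le hlamτ
  rw [sub_self, abs_zero, zero_mul, add_zero] at hy'Y hy₀y
  rw [norm_sub_rev x w.2] at hy₀y
  linarith [norm_sub_le_norm_sub_add_norm_sub x' w.2 x,
    norm_sub_le_norm_sub_add_norm_sub y' (Y w.1) y,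
    norm_sub_le_norm_sub_add_norm_sub (Y w.1) y₀ y]

end UniformResolvent

section Collar

variable {δ u : ℝ}

/-- The two half-open intervals of length `δ` adjacent to `(0, 1]`. -/
def collar (δ : ℝ) : Set ℝ := Ioc (-δ) 0 ∪ Ioc 1 (1 + δ)

/-- The trapezoidal profile on `[-δ, 1 + δ]`: it equals `δ` on `[0, 1]` and decreases to `0` with
slope `1` across the `collar`. It is the resolvent parameter along the extended time interval. -/
def collarProfile (δ u : ℝ) : ℝ := max (-δ) (min 0 u) - max 1 (min (1 + δ) u) + (1 + δ)

theorem measurableSet_collar : MeasurableSet (collar δ) := measurableSet_Ioc.union measurableSet_Ioc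

theorem disjoint_Ioc_Ioc_collar (δ : ℝ) : Disjoint (Ioc (-δ) 0) (Ioc 1 (1 + δ)) :=
  Set.disjoint_left.2 fun _ hr hr' => (hr.2.trans_lt zero_lt_one).not_gt hr'.1

theorem volume_collar : volume (collar δ) = 2 * ENNReal.ofReal δ := by
  rw [collar, measure_union (disjoint_Ioc_Ioc_collar δ) measurableSet_Ioc, Real.volume_Ioc,
    Real.volume_Ioc, sub_neg_eq_add, zero_add, add_sub_cancel_left, two_mul]

theorem notMem_collar_of_mem_Ioc (hu : u ∈ Ioc 0 1) : u ∉ collar δ :=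
  not_or.2 ⟨fun h => h.2.not_gt hu.1, fun h => hu.2.not_gt h.1⟩

theorem Ioc_subset_union_collar : Ioc (-δ) (1 + δ) ⊆ Ioc 0 1 ∪ collar δ := fun r hr => by
  rcases le_or_gt r 0 with h0 | h0
  · exact .inr (.inl ⟨hr.1, h0⟩)
  rcases le_or_gt r 1 with h1 | h1
  exacts [.inl ⟨h0, h1⟩, .inr (.inr ⟨h1, hr.2⟩)]

theorem lintegral_add_indicator_collar_sq {m : ℝ → ℝ≥0∞} (hm : ∀ r ∉ Ioc 0 1, m r = 0)
    (C : ℝ≥0∞) : ∫⁻ r, (m r + C * (collar δ).indicator 1 r) ^ 2 =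
      (∫⁻ r, m r ^ 2) + C ^ 2 * (2 * ENNReal.ofReal δ) := by
  have hsq (r : ℝ) : (m r + C * (collar δ).indicator 1 r) ^ 2 =
      m r ^ 2 + (collar δ).indicator (fun _ => C ^ 2) r := by
    by_cases hr : r ∈ collar δ
    · simp [hr, hm r fun h => notMem_collar_of_mem_Ioc h hr]
    · simp [hr]
  simp only [hsq]
  rw [lintegral_add_right _ (measurable_const.indicator measurableSet_collar),
    lintegral_indicator_const measurableSet_collar, volume_collar]

theorem collarProfile_nonneg (hδ : 0 ≤ δ) (u : ℝ) : 0 ≤ collarProfile δ u := by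
  have h₀ : -δ ≤ max (-δ) (min 0 u) := le_max_left ..
  have h₁ : max 1 (min (1 + δ) u) ≤ 1 + δ := max_le (by linarith) (min_le_left ..)
  rcases le_or_gt 0 u with hu | hu
  · rw [collarProfile, min_eq_left hu, max_eq_right (neg_nonpos.2 hδ)]
    linarith
  · rw [collarProfile, min_eq_right (by linarith : u ≤ 1 + δ), max_eq_left (by linarith : u ≤ 1)]
    linarith

theorem collarProfile_le (hδ : 0 ≤ δ) (u : ℝ) : collarProfile δ u ≤ δ := by
  have h₀ : max (-δ) (min 0 u) ≤ 0 := max_le (neg_nonpos.2 hδ) (min_le_left ..)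
  have h₁ : 1 ≤ max 1 (min (1 + δ) u) := le_max_left ..
  rw [collarProfile]
  linarith

theorem collarProfile_of_mem_Icc (hδ : 0 ≤ δ) (hu : u ∈ Icc 0 1) : collarProfile δ u = δ := by
  rw [collarProfile, min_eq_left hu.1, max_eq_right (neg_nonpos.2 hδ),
    min_eq_right (by linarith [hu.2]), max_eq_left hu.2]
  ring

theorem collarProfile_neg_self (hδ : 0 ≤ δ) : collarProfile δ (-δ) = 0 := by
  rw [collarProfile, min_eq_right (neg_nonpos.2 hδ), max_self, min_eq_right (by linarith),
    max_eq_left (by linarith)]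
  ring

theorem collarProfile_one_add_self (hδ : 0 ≤ δ) : collarProfile δ (1 + δ) = 0 := by
  rw [collarProfile, min_self, min_eq_left (by linarith), max_eq_right (neg_nonpos.2 hδ),
    max_eq_right (by linarith)]
  ring

theorem isSpeedBound_collarProfile (hδ : 0 ≤ δ) :
    IsSpeedBound ((collar δ).indicator 1) (collarProfile δ) := by
  have hclamp {a b : ℝ} (hab : a ≤ b) :
      IsSpeedBound ((Ioc a b).indicator 1) fun u => max a (min b u) := by
    simp only [← coe_projIcc a b hab]
    refine isSpeedBound_comp_projIcc (c := id) hab fun s _ t _ hst => ?_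
    rw [id, id, Real.enorm_of_nonneg (sub_nonneg.2 hst)]
    simp
  intro s t hst
  rw [collar, indicator_union_of_disjoint (disjoint_Ioc_Ioc_collar δ),
    lintegral_add_left (measurable_one.indicator measurableSet_Ioc), collarProfile, collarProfile,
    add_sub_add_right_eq_sub, sub_sub_sub_comm]
  exact (enorm_sub_le).trans (add_le_add (hclamp (neg_nonpos.2 hδ) hst)
    (hclamp (le_add_of_nonneg_right hδ) hst))

end Collar

section RecoveryCurve

variable {E : Type*} [NormedAddCommGroup E] [InnerProductSpace ℝ E] {lam δ κ L : ℝ}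
  {f : E → EReal} {m : ℝ → ℝ≥0∞} {c Y P : ℝ → E}

/-- `Y u` is the image of `c u` under the resolvent with parameter `collarProfile δ u`. The
subgradients `P u` are required to be bounded by `L` outside `(0, 1)`, where the parameter varies;
this is what keeps the cost of `Y` over the `collar` of order `δ`. -/
structure ResolventCurve (lam : ℝ) (f : E → EReal) (δ L : ℝ) (c Y P : ℝ → E) : Prop where
  resolventStep : ∀ u, ResolventStep lam f (collarProfile δ u) (c u) (Y u) (P u)
  norm_le : ∀ u ∉ Ioo 0 1, ‖P u‖ ≤ L

theorem exists_resolventCurve [CompleteSpace E] (hf_conv : LambdaConvex lam f)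
    (hf : ∀ x, f x ≠ ⊥) (hl : LowerSemicontinuous f) (hδ : 0 < δ) (hlamδ : |lam| * δ ≤ 1 / 2)
    (hq : ∀ u ∉ Ioo 0 1, ∃ q ∈ subdiff lam f (c u), ‖q‖ ≤ L) :
    ∃ Y P, ResolventCurve lam f δ (2 * L) c Y P := by
  have hstep (u : ℝ) : ∃ y p, ResolventStep lam f (collarProfile δ u) (c u) y p ∧
      (u ∉ Ioo 0 1 → ‖p‖ ≤ 2 * L) := by
    have hτ := collarProfile_nonneg hδ.le u
    have hκ : 1 / 2 ≤ 1 + lam * collarProfile δ u := one_half_le_one_add_mul hτ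
      ((mul_le_mul_of_nonneg_left (collarProfile_le hδ.le u) (abs_nonneg _)).trans hlamδ)
    by_cases hu : u ∈ Ioo 0 1
    · obtain ⟨q, hq, -⟩ := hq 0 (by simp)
      rw [collarProfile_of_mem_Icc hδ.le (Ioo_subset_Icc_self hu)] at hκ ⊢
      obtain ⟨y, p, hy⟩ := hf_conv.exists_resolventStep hf hl hq hδ (by linarith) (c u)
      exact ⟨y, p, hy, absurd hu⟩
    · obtain ⟨q, hqc, hqL⟩ := hq u hu
      obtain ⟨y, p, hy, hp⟩ := hf_conv.exists_resolventStep_norm_le hf hl hqc hτ (by linarith)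
      exact ⟨y, p, hy, fun _ => by nlinarith [norm_nonneg p]⟩
  choose Y P hY hP using hstep
  exact ⟨Y, P, hY, hP⟩

namespace ResolventCurve

theorem mul_norm_sub_le (hY : ResolventCurve lam f δ L c Y P) (hf : ∀ x, f x ≠ ⊥) (hδ : 0 ≤ δ)
    (hκδ : κ ≤ 1 - |lam| * δ) (s t : ℝ) :
    κ * ‖Y t - Y s‖ ≤ ‖c t - c s‖ + |collarProfile δ t - collarProfile δ s| * L := by
  have hκ (u : ℝ) : κ ≤ 1 + lam * collarProfile δ u := by
    have := mul_le_mul_of_nonneg_left (collarProfile_le hδ u) (abs_nonneg lam)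
    linarith [mul_le_mul_of_nonneg_right (neg_abs_le lam) (collarProfile_nonneg hδ u)]
  have hstep (s t : ℝ) : κ * ‖Y t - Y s‖ ≤
      ‖c t - c s‖ + |collarProfile δ t - collarProfile δ s| * ‖P t‖ :=
    (mul_le_mul_of_nonneg_right (hκ s) (norm_nonneg _)).trans
      ((hY.resolventStep t).mul_norm_sub_le hf (hY.resolventStep s) (collarProfile_nonneg hδ s))
  by_cases ht : t ∈ Ioo 0 1
  · by_cases hs : s ∈ Ioo 0 1
    · simpa only [collarProfile_of_mem_Icc hδ (Ioo_subset_Icc_self ht),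
        collarProfile_of_mem_Icc hδ (Ioo_subset_Icc_self hs), sub_self, abs_zero, zero_mul]
        using hstep s t
    · rw [norm_sub_rev, norm_sub_rev (c t), abs_sub_comm]
      exact (hstep t s).trans (by gcongr; exact hY.norm_le s hs)
  · exact (hstep s t).trans (by gcongr; exact hY.norm_le t ht)

theorem isSpeedBound (hY : ResolventCurve lam f δ L c Y P) (hf : ∀ x, f x ≠ ⊥) (hδ : 0 ≤ δ)
    (hκ : 0 < κ) (hκδ : κ ≤ 1 - |lam| * δ) (hm : Measurable m) (hc : IsSpeedBound m c) :
    IsSpeedBound (fun r => ENNReal.ofReal κ⁻¹ * (m r + ENNReal.ofReal L * (collar δ).indicator 1 r))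
      Y := fun s t hst => by
  have hτ := isSpeedBound_collarProfile hδ hst
  rw [lintegral_const_mul' _ _ ENNReal.ofReal_ne_top, lintegral_add_left hm,
    lintegral_const_mul' _ _ ENNReal.ofReal_ne_top]
  calc ‖Y t - Y s‖ₑ
      ≤ ENNReal.ofReal
          (κ⁻¹ * (‖c t - c s‖ + L * |collarProfile δ t - collarProfile δ s|)) := by
        rw [← ofReal_norm, mul_comm L]
        exact ENNReal.ofReal_le_ofReal ((le_inv_mul_iff₀ hκ).2 (hY.mul_norm_sub_le hf hδ hκδ s t))
    _ ≤ ENNReal.ofReal κ⁻¹ *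
          (‖c t - c s‖ₑ + ENNReal.ofReal L * ‖collarProfile δ t - collarProfile δ s‖ₑ) := by
        rw [ENNReal.ofReal_mul (inv_pos.2 hκ).le, ← ofReal_norm, ← ofReal_norm, Real.norm_eq_abs,
          ← ENNReal.ofReal_mul' (abs_nonneg _)]
        gcongr
        exact ENNReal.ofReal_add_le
    _ ≤ _ := by gcongr; exact hc hst

theorem lintegral_enorm_sq_le (hY : ResolventCurve lam f δ L c Y P) :
    ∫⁻ u in Ioc (-δ) (1 + δ), ‖P u‖ₑ ^ 2 ≤
      (∫⁻ u in Ioc 0 1, ‖P u‖ₑ ^ 2) + ENNReal.ofReal L ^ 2 * (2 * ENNReal.ofReal δ) :=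
  calc ∫⁻ u in Ioc (-δ) (1 + δ), ‖P u‖ₑ ^ 2
      ≤ ∫⁻ u in Ioc 0 1 ∪ collar δ, ‖P u‖ₑ ^ 2 := lintegral_mono_set Ioc_subset_union_collar
    _ ≤ (∫⁻ u in Ioc 0 1, ‖P u‖ₑ ^ 2) + ∫⁻ u in collar δ, ‖P u‖ₑ ^ 2 := lintegral_union_le _ _ _
    _ ≤ (∫⁻ u in Ioc 0 1, ‖P u‖ₑ ^ 2) + ∫⁻ u in collar δ, ENNReal.ofReal L ^ 2 := by
        refine add_le_add_right (setLIntegral_mono' measurableSet_collar fun u hu => ?_) _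
        rw [← ofReal_norm]
        gcongr
        exact hY.norm_le u fun h => notMem_collar_of_mem_Ioc (Ioo_subset_Ioc_self h) hu
    _ = _ := by rw [setLIntegral_const, volume_collar]

theorem lintegral_gradNorm_sq_comp_affine_le (hY : ResolventCurve lam f δ L c Y P) (hδ : 0 ≤ δ) :
    ∫⁻ t in Ioc 0 1, gradNorm lam f (Y ((1 + 2 * δ) * t + -δ)) ^ 2 ≤
      (∫⁻ u in Ioc 0 1, ‖P u‖ₑ ^ 2) + ENNReal.ofReal L ^ 2 * (2 * ENNReal.ofReal δ) := by
  have hk : 0 < 1 + 2 * δ := by linarith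
  calc ∫⁻ t in Ioc 0 1, gradNorm lam f (Y ((1 + 2 * δ) * t + -δ)) ^ 2
      ≤ ∫⁻ t in Ioc 0 1, ‖P ((1 + 2 * δ) * t + -δ)‖ₑ ^ 2 :=
        lintegral_mono fun t => by
          gcongr
          exact gradNorm_le_enorm (hY.resolventStep _).mem_subdiff
    _ = ENNReal.ofReal (1 + 2 * δ)⁻¹ * ∫⁻ u in Ioc (-δ) (1 + δ), ‖P u‖ₑ ^ 2 := by
        rw [setLIntegral_comp_affine (‖P ·‖ₑ ^ 2) hk]
        ring_nf
    _ ≤ ∫⁻ u in Ioc (-δ) (1 + δ), ‖P u‖ₑ ^ 2 :=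
        mul_le_of_le_one_left' (ENNReal.ofReal_le_one.2 (inv_le_one_of_one_le₀ (by linarith)))
    _ ≤ _ := hY.lintegral_enorm_sq_le

variable [CompleteSpace E]

theorem kineticEnergy_comp_affine_le (hY : ResolventCurve lam f δ L c Y P) (hf : ∀ x, f x ≠ ⊥)
    (hδ : 0 ≤ δ) (hκ : 0 < κ) (hκδ : κ ≤ 1 - |lam| * δ) (hm : Measurable m)
    (hm₀ : ∀ r ∉ Ioc 0 1, m r = 0) (hc : IsSpeedBound m c) :
    kineticEnergy 0 1 (fun t => Y ((1 + 2 * δ) * t + -δ)) ≤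
      ENNReal.ofReal (1 + 2 * δ) * ENNReal.ofReal κ⁻¹ ^ 2 *
        ((∫⁻ r, m r ^ 2) + ENNReal.ofReal L ^ 2 * (2 * ENNReal.ofReal δ)) := by
  have hk : 0 < 1 + 2 * δ := by linarith
  have hmeas : Measurable fun r => ENNReal.ofReal κ⁻¹ *
      (m r + ENNReal.ofReal L * (collar δ).indicator 1 r) :=
    (hm.add ((measurable_one.indicator measurableSet_collar).const_mul _)).const_mul _
  refine (((hY.isSpeedBound hf hδ hκ hκδ hm hc).comp_affine hk (-δ)).kineticEnergy_le
    ((hmeas.comp (by fun_prop)).const_mul _) zero_le_one).trans_eq ?_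
  simp only [mul_pow, ← mul_assoc]
  rw [lintegral_const_mul' _ _ (by finiteness), lintegral_comp_affine
    (fun r => (m r + ENNReal.ofReal L * (collar δ).indicator 1 r) ^ 2) hk,
    lintegral_add_indicator_collar_sq hm₀, ENNReal.ofReal_inv_of_pos hk]
  generalize ∫⁻ r, m r ^ 2 = V
  calc _ = (ENNReal.ofReal (1 + 2 * δ) * (ENNReal.ofReal (1 + 2 * δ))⁻¹) *
          (ENNReal.ofReal (1 + 2 * δ) * ENNReal.ofReal κ⁻¹ ^ 2 *
            (V + ENNReal.ofReal L ^ 2 * 2 * ENNReal.ofReal δ)) := by ring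
    _ = _ := by
        rw [ENNReal.mul_inv_cancel (ENNReal.ofReal_pos.2 hk).ne' ENNReal.ofReal_ne_top, one_mul]

theorem theta_comp_affine_le (hY : ResolventCurve lam f δ L c Y P) (hf : ∀ x, f x ≠ ⊥)
    (hδ : 0 ≤ δ) (hκ : 0 < κ) (hκδ : κ ≤ 1 - |lam| * δ) (hm : Measurable m)
    (hm₀ : ∀ r ∉ Ioc 0 1, m r = 0) (hc : IsSpeedBound m c) :
    Theta lam f (c (-δ)) (c (1 + δ)) (fun t => Y ((1 + 2 * δ) * t + -δ)) ≤
      ENNReal.ofReal (1 + 2 * δ) * ENNReal.ofReal κ⁻¹ ^ 2 *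
          ((∫⁻ r, m r ^ 2) + ENNReal.ofReal L ^ 2 * (2 * ENNReal.ofReal δ)) +
        ((∫⁻ u in Ioc 0 1, ‖P u‖ₑ ^ 2) + ENNReal.ofReal L ^ 2 * (2 * ENNReal.ofReal δ)) := by
  have hend (u : ℝ) (hu : collarProfile δ u = 0) : Y u = c u := by
    simpa [hu] using (hY.resolventStep u).add_smul_eq
  rw [Theta, if_pos, actionFn_eq _ _ zero_le_one]
  · exact add_le_add (hY.kineticEnergy_comp_affine_le hf hδ hκ hκδ hm hm₀ hc)
      (hY.lintegral_gradNorm_sq_comp_affine_le hδ)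
  · ring_nf
    exact ⟨hend _ (collarProfile_neg_self hδ), hend _ (collarProfile_one_add_self hδ)⟩

end ResolventCurve

end RecoveryCurve

section RecoveryCost

theorem add_sq_le_one_add_mul (x e : ℝ≥0∞) : (x + e) ^ 2 ≤ (1 + e) * x ^ 2 + (e + e ^ 2) := by
  rcases eq_or_ne e ⊤ with rfl | he
  · simp
  rcases eq_or_ne x ⊤ with rfl | hx
  · simp
  lift x to NNReal using hx
  lift e to NNReal using he
  norm_cast
  have := mul_nonneg e.coe_nonneg (sq_nonneg ((x : ℝ) - 1))
  rw [← NNReal.coe_le_coe]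
  push_cast
  linarith

theorem lintegral_add_const_sq_le {α : Type*} [MeasurableSpace α] {μ : Measure α} (g : α → ℝ≥0∞)
    {e : ℝ≥0∞} (he : e ≠ ⊤) :
    ∫⁻ x, (g x + e) ^ 2 ∂μ ≤ (1 + e) * (∫⁻ x, g x ^ 2 ∂μ) + (e + e ^ 2) * μ univ :=
  calc ∫⁻ x, (g x + e) ^ 2 ∂μ ≤ ∫⁻ x, ((1 + e) * g x ^ 2 + (e + e ^ 2)) ∂μ :=
        lintegral_mono fun x => add_sq_le_one_add_mul (g x) e
    _ = _ := by
        rw [lintegral_add_right _ measurable_const, lintegral_const_mul' _ _ (by finiteness),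
          lintegral_const]

theorem lintegral_add_indicator_Ioc_sq_le {m : ℝ → ℝ≥0∞} (hm : ∀ r ∉ Ioc 0 1, m r = 0)
    {e : ℝ≥0∞} (he : e ≠ ⊤) : ∫⁻ r, (m r + (Ioc 0 1).indicator (fun _ => e) r) ^ 2 ≤
      (1 + e) * (∫⁻ r, m r ^ 2) + (e + e ^ 2) := by
  have hsq : (fun r => (m r + (Ioc 0 1).indicator (fun _ => e) r) ^ 2) =
      (Ioc 0 1).indicator fun r => (m r + e) ^ 2 := by
    ext r
    by_cases hr : r ∈ Ioc 0 1 <;> simp [hr, hm]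
  rw [hsq, lintegral_indicator measurableSet_Ioc]
  refine (lintegral_add_const_sq_le m he).trans ?_
  rw [Measure.restrict_apply_univ, Real.volume_Ioc, sub_zero, ENNReal.ofReal_one, mul_one]
  gcongr
  exact Measure.restrict_le_self

/-- An upper bound for the action of a recovery curve built with collars of width `δ`, when the
limit curve has kinetic energy `V` and slope energy `S`, and the subgradients are bounded by `L` on
the collars. -/
def recoveryCost (lam L : ℝ) (V S : ℝ≥0∞) (δ : ℝ) : ℝ≥0∞ :=
  ENNReal.ofReal (1 + 2 * δ) * ENNReal.ofReal (1 - |lam| * δ)⁻¹ ^ 2 *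
      ((1 + ENNReal.ofReal δ) * V + (ENNReal.ofReal δ + ENNReal.ofReal δ ^ 2) +
        ENNReal.ofReal L ^ 2 * (2 * ENNReal.ofReal δ)) +
    (ENNReal.ofReal (1 - |lam| * δ)⁻¹ ^ 2 *
      ((1 + ENNReal.ofReal δ) * S + (ENNReal.ofReal δ + ENNReal.ofReal δ ^ 2)) +
        ENNReal.ofReal L ^ 2 * (2 * ENNReal.ofReal δ))

theorem tendsto_recoveryCost (lam L : ℝ) (V S : ℝ≥0∞) :
    Tendsto (recoveryCost lam L V S) (𝓝 0) (𝓝 (V + S)) := by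
  have hδ : Tendsto ENNReal.ofReal (𝓝 0) (𝓝 0) := by
    simpa using ENNReal.tendsto_ofReal (tendsto_id (x := 𝓝 (0 : ℝ)))
  have hk : Tendsto (fun δ : ℝ => ENNReal.ofReal (1 + 2 * δ)) (𝓝 0) (𝓝 1) := by
    simpa using ENNReal.tendsto_ofReal
      (Continuous.tendsto (by fun_prop : Continuous fun δ : ℝ => 1 + 2 * δ) 0)
  have hκ : Tendsto (fun δ : ℝ => ENNReal.ofReal (1 - |lam| * δ)⁻¹ ^ 2) (𝓝 0) (𝓝 1) := by
    have hcont : ContinuousAt (fun δ : ℝ => (1 - |lam| * δ)⁻¹) 0 :=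
      ContinuousAt.inv₀ (by fun_prop) (by simp)
    simpa [Function.comp_def] using (ENNReal.continuous_pow 2).continuousAt.tendsto.comp
      (ENNReal.tendsto_ofReal hcont.tendsto)
  have herr : Tendsto (fun δ : ℝ => ENNReal.ofReal δ + ENNReal.ofReal δ ^ 2) (𝓝 0) (𝓝 0) := by
    simpa using hδ.add ((ENNReal.continuous_pow 2).continuousAt.tendsto.comp hδ)
  have hcollar : Tendsto (fun δ : ℝ => ENNReal.ofReal L ^ 2 * (2 * ENNReal.ofReal δ)) (𝓝 0)
      (𝓝 0) := by
    simpa using ENNReal.Tendsto.const_mul (a := ENNReal.ofReal L ^ 2)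
      (ENNReal.Tendsto.const_mul (a := 2) hδ (.inr (by simp))) (.inr (by finiteness))
  have hmain (W : ℝ≥0∞) : Tendsto (fun δ => (1 + ENNReal.ofReal δ) * W) (𝓝 0) (𝓝 W) := by
    simpa using ENNReal.Tendsto.mul_const (b := W) (hδ.const_add 1) (.inl (by simp))
  unfold recoveryCost
  simpa using (ENNReal.Tendsto.mul (ENNReal.Tendsto.mul hk (.inl one_ne_zero) hκ (.inl one_ne_zero))
    (.inl (by simp)) (((hmain V).add herr).add hcollar) (.inr (by simp))).add
    ((ENNReal.Tendsto.mul hκ (.inl one_ne_zero) ((hmain S).add herr) (.inr (by simp))).add hcollar)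

end RecoveryCost

section FixedCollar

variable {E : Type*} [NormedAddCommGroup E]

theorem exists_isSpeedBound_interpolation [NormedSpace ℝ E] {m : ℝ → ℝ≥0∞} {g : ℝ → E} {δ ε : ℝ}
    {e₀ e₁ : E} (hm : Measurable m) (hg : IsSpeedBound m g) (hεδ : 2 * ε ≤ δ) (he₀ : ‖e₀‖ ≤ ε)
    (he₁ : ‖e₁‖ ≤ ε) :
    ∃ c, IsSpeedBound (fun r => m r + (Ioc 0 1).indicator (fun _ => ENNReal.ofReal δ) r) c ∧
      (∀ u, ‖c u - g u‖ ≤ ε) ∧ (∀ u ≤ 0, c u = g u + e₀) ∧ ∀ u ≥ 1, c u = g u + e₁ := by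
  have hspeed : IsSpeedBound ((Ioc 0 1).indicator fun _ => ENNReal.ofReal δ)
      fun u => AffineMap.lineMap e₀ e₁ (projIcc (0 : ℝ) 1 zero_le_one u : ℝ) := by
    refine isSpeedBound_comp_projIcc (c := AffineMap.lineMap e₀ e₁) zero_le_one
      fun s _ t _ hst => ?_
    have hδ : dist e₀ e₁ ≤ δ := by
      rw [dist_eq_norm]
      linarith [norm_sub_le e₀ e₁]
    rw [← edist_eq_enorm_sub, edist_dist, dist_lineMap_lineMap, Real.dist_eq,
      abs_of_nonneg (sub_nonneg.2 hst), setLIntegral_const, Real.volume_Ioc,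
      ← ENNReal.ofReal_mul (dist_nonneg.trans hδ), mul_comm δ]
    gcongr
  refine ⟨_, hg.add hm hspeed, fun u => ?_, fun u hu => ?_, fun u hu => ?_⟩
  · rw [add_sub_cancel_left, ← mem_closedBall_zero_iff]
    exact (convex_closedBall 0 ε).lineMap_mem (mem_closedBall_zero_iff.2 he₀)
      (mem_closedBall_zero_iff.2 he₁) (Subtype.coe_prop _)
  · rw [projIcc_of_le_left _ hu, AffineMap.lineMap_apply_zero]
  · rw [projIcc_of_right_le _ hu, AffineMap.lineMap_apply_one]

variable [InnerProductSpace ℝ E] {lam δ θ τ M : ℝ} {F f : E → EReal} {m : ℝ → ℝ≥0∞}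
  {g c Y P y p : ℝ → E}

theorem ResolventStep.mul_norm_le_add {x x' y y' p p' : E} (hy : ResolventStep lam f τ x y p)
    (hy' : ResolventStep lam F τ x' y' p') (hτ : 0 ≤ τ) :
    τ * ‖p'‖ ≤ τ * ‖p‖ + (‖x' - x‖ + ‖y' - y‖) := by
  rw [← hy.norm_sub_eq hτ, ← hy'.norm_sub_eq hτ]
  have h : x' - y' = (x - y) + ((x' - x) - (y' - y)) := by abel
  rw [h]
  exact (norm_add_le _ _).trans (by gcongr; exact norm_sub_le _ _)

theorem ResolventCurve.norm_sub_le {L η : ℝ} (hY : ResolventCurve lam F δ L c Y P) (hδ : 0 ≤ δ)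
    (hcg : ∀ u, ‖c u - g u‖ ≤ η) (hYg : ∀ u ∈ Icc 0 1, ‖Y u - g u‖ ≤ η) (u : ℝ) :
    ‖Y u - g u‖ ≤ η + δ * L := by
  have hL : 0 ≤ L := (norm_nonneg _).trans (hY.norm_le 0 (by simp))
  by_cases hu : u ∈ Ioo 0 1
  · exact (hYg u (Ioo_subset_Icc_self hu)).trans (le_add_of_nonneg_right (mul_nonneg hδ hL))
  · have hYc : ‖Y u - c u‖ ≤ δ * L := by
      rw [norm_sub_rev, (hY.resolventStep u).norm_sub_eq (collarProfile_nonneg hδ u)]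
      gcongr
      exacts [collarProfile_le hδ u, hY.norm_le u hu]
    linarith [norm_sub_le_norm_sub_add_norm_sub (Y u) (c u) (g u), hcg u]

variable [CompleteSpace E]

theorem ResolventStep.enorm_le_mul_gradNorm_add {x x' y y' p p' : E} (hf : ∀ x, f x ≠ ⊥)
    (hδ : 0 < δ) (hlamδ : |lam| * δ ≤ 1 / 2) (hy : ResolventStep lam f δ x y p)
    (hy' : ResolventStep lam F δ x' y' p') (hclose : ‖x' - x‖ + ‖y' - y‖ ≤ δ * δ) :
    ‖p'‖ₑ ≤ ENNReal.ofReal (1 - |lam| * δ)⁻¹ * (gradNorm lam f x + ENNReal.ofReal δ) := by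
  have hlam : 0 ≤ |lam| * δ := by positivity
  have hκ : 1 - |lam| * δ ≤ 1 + lam * δ := by
    linarith [mul_le_mul_of_nonneg_right (neg_abs_le lam) hδ.le]
  have hp : ‖p'‖ ≤ ‖p‖ + δ := le_of_mul_le_mul_left
    (by linarith [hy.mul_norm_le_add hy' hδ.le] : δ * ‖p'‖ ≤ δ * (‖p‖ + δ)) hδ
  calc ‖p'‖ₑ ≤ ‖p‖ₑ + ENNReal.ofReal δ := by
        rw [← ofReal_norm, ← ofReal_norm, ← ENNReal.ofReal_add (norm_nonneg p) hδ.le]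
        exact ENNReal.ofReal_le_ofReal hp
    _ ≤ ENNReal.ofReal (1 - |lam| * δ)⁻¹ * gradNorm lam f x +
          ENNReal.ofReal (1 - |lam| * δ)⁻¹ * ENNReal.ofReal δ := by
        gcongr
        · exact hy.enorm_le_mul_gradNorm hf hδ (by linarith) hκ
        · refine le_mul_of_one_le_left' (ENNReal.one_le_ofReal.2 ?_)
          exact (one_le_inv₀ (by linarith)).2 (by linarith)
    _ = _ := (mul_add ..).symm

theorem ResolventCurve.theta_le_recoveryCost {L : ℝ} {s : ℝ → ℝ≥0∞}
    (hY : ResolventCurve lam F δ L c Y P) (hF : ∀ x, F x ≠ ⊥) (hδ : 0 ≤ δ)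
    (hlamδ : |lam| * δ ≤ 1 / 2) (hm : Measurable m) (hm₀ : ∀ r ∉ Ioc 0 1, m r = 0)
    (hc : IsSpeedBound (fun r => m r + (Ioc 0 1).indicator (fun _ => ENNReal.ofReal δ) r) c)
    (hP : ∀ u ∈ Ioc 0 1, ‖P u‖ₑ ≤
      ENNReal.ofReal (1 - |lam| * δ)⁻¹ * (s u + ENNReal.ofReal δ)) :
    Theta lam F (c (-δ)) (c (1 + δ)) (fun t => Y ((1 + 2 * δ) * t + -δ)) ≤
      recoveryCost lam L (∫⁻ r, m r ^ 2) (∫⁻ u in Ioc 0 1, s u ^ 2) δ := by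
  have hPsq : ∫⁻ u in Ioc 0 1, ‖P u‖ₑ ^ 2 ≤ ENNReal.ofReal (1 - |lam| * δ)⁻¹ ^ 2 *
      ((1 + ENNReal.ofReal δ) * (∫⁻ u in Ioc 0 1, s u ^ 2) +
        (ENNReal.ofReal δ + ENNReal.ofReal δ ^ 2)) :=
    calc ∫⁻ u in Ioc 0 1, ‖P u‖ₑ ^ 2
        ≤ ∫⁻ u in Ioc 0 1, ENNReal.ofReal (1 - |lam| * δ)⁻¹ ^ 2 * (s u + ENNReal.ofReal δ) ^ 2 :=
          setLIntegral_mono' measurableSet_Ioc fun u hu => by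
            rw [← mul_pow]
            gcongr
            exact hP u hu
      _ = ENNReal.ofReal (1 - |lam| * δ)⁻¹ ^ 2 * ∫⁻ u in Ioc 0 1, (s u + ENNReal.ofReal δ) ^ 2 :=
          lintegral_const_mul' _ _ (by finiteness)
      _ ≤ _ := by
          gcongr
          simpa using lintegral_add_const_sq_le (μ := volume.restrict (Ioc (0 : ℝ) 1)) s
            (ENNReal.ofReal_ne_top (r := δ))
  refine (hY.theta_comp_affine_le hF hδ (by linarith) le_rfl
    (hm.add (measurable_const.indicator measurableSet_Ioc)) (fun r hr => ?_) hc).trans ?_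
  · rw [Pi.add_apply, hm₀ r hr, indicator_of_notMem hr, zero_add]
  · unfold recoveryCost
    gcongr
    exact lintegral_add_indicator_Ioc_sq_le hm₀ ENNReal.ofReal_ne_top

theorem exists_theta_le_recoveryCost (hFc : LambdaConvex lam F) (hF : ∀ x, F x ≠ ⊥)
    (hFl : LowerSemicontinuous F) (hf : ∀ x, f x ≠ ⊥) (hδ : 0 < δ) (hδ' : δ ≤ 2)
    (hlamδ : |lam| * δ ≤ 1 / 2) (hm : Measurable m) (hm₀ : ∀ r ∉ Ioc 0 1, m r = 0)
    (hg : IsSpeedBound m g) {x₀ x₁ a₀ a₁ q₀ q₁ : E} (hg₀ : ∀ u ≤ 0, g u = x₀)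
    (hg₁ : ∀ u ≥ 1, g u = x₁) (hq₀ : q₀ ∈ subdiff lam F a₀) (hq₁ : q₁ ∈ subdiff lam F a₁)
    (hq₀M : ‖q₀‖ ≤ M) (hq₁M : ‖q₁‖ ≤ M) (ha₀ : ‖a₀ - x₀‖ ≤ δ ^ 2 / 4)
    (ha₁ : ‖a₁ - x₁‖ ≤ δ ^ 2 / 4) (hy : ∀ u, ResolventStep lam f δ (g u) (y u) (p u))
    (hyθ : ∀ u, ‖g u - y u‖ ≤ θ)
    (hclose : ∀ u x' y' p', ‖x' - g u‖ ≤ δ ^ 2 / 4 → ResolventStep lam F δ x' y' p' →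
      ‖y' - y u‖ ≤ 3 * (δ ^ 2 / 4)) :
    ∃ Y : ℝ → E, (∀ u, ‖Y u - g u‖ ≤ θ + δ ^ 2 + δ * (2 * M)) ∧
      Theta lam F a₀ a₁ (fun t => Y ((1 + 2 * δ) * t + -δ)) ≤ recoveryCost lam (2 * M)
        (∫⁻ r, m r ^ 2) (∫⁻ u in Ioc 0 1, gradNorm lam f (g u) ^ 2) δ := by
  have hδsq : 0 ≤ δ ^ 2 := sq_nonneg δ
  obtain ⟨c, hc, hcg, hc₀, hc₁⟩ := exists_isSpeedBound_interpolation hm hg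
    (by nlinarith : 2 * (δ ^ 2 / 4) ≤ δ) ha₀ ha₁
  replace hc₀ (u : ℝ) (hu : u ≤ 0) : c u = a₀ := by rw [hc₀ u hu, hg₀ u hu, add_sub_cancel]
  replace hc₁ (u : ℝ) (hu : u ≥ 1) : c u = a₁ := by rw [hc₁ u hu, hg₁ u hu, add_sub_cancel]
  obtain ⟨Y, P, hY⟩ := exists_resolventCurve hFc hF hFl hδ hlamδ (c := c) (L := M) fun u hu => by
    rcases le_or_gt u 0 with h | h
    · exact ⟨q₀, hc₀ u h ▸ hq₀, hq₀M⟩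
    · exact ⟨q₁, hc₁ u (not_lt.1 fun h' => hu ⟨h, h'⟩) ▸ hq₁, hq₁M⟩
  have hYu (u : ℝ) (hu : u ∈ Icc 0 1) : ResolventStep lam F δ (c u) (Y u) (P u) :=
    collarProfile_of_mem_Icc hδ.le hu ▸ hY.resolventStep u
  have hYy (u : ℝ) (hu : u ∈ Icc 0 1) := hclose u _ _ _ (hcg u) (hYu u hu)
  have hθ : 0 ≤ θ := (norm_nonneg _).trans (hyθ 0)
  refine ⟨Y, hY.norm_sub_le hδ.le (fun u => by linarith [hcg u]) fun u hu => ?_, ?_⟩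
  · linarith [norm_sub_le_norm_sub_add_norm_sub (Y u) (y u) (g u), hYy u hu, hyθ u,
      norm_sub_rev (g u) (y u)]
  · rw [← hc₀ (-δ) (by linarith), ← hc₁ (1 + δ) (by linarith)]
    refine hY.theta_le_recoveryCost hF hδ.le hlamδ hm hm₀ hc fun u hu => ?_
    have hu' := Ioc_subset_Icc_self hu
    exact (hy u).enorm_le_mul_gradNorm_add hf hδ hlamδ (hYu u hu')
      (by linarith [hcg u, hYy u hu'])

end FixedCollar

section Diagonal

theorem exists_tendsto_eventually_of_forall_eventually {Q : ℕ → ℕ → Prop}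
    (hQ : ∀ k, ∀ᶠ n in atTop, Q k n) :
    ∃ N : ℕ → ℕ, Tendsto N atTop atTop ∧ ∀ᶠ n in atTop, Q (N n) n := by
  refine ⟨fun n => Nat.findGreatest (Q · n) n, tendsto_atTop.2 fun k => ?_, ?_⟩
  · filter_upwards [hQ k, eventually_ge_atTop k] with n hn hkn using Nat.le_findGreatest hkn hn
  · filter_upwards [hQ 0] with n hn using
      Nat.findGreatest_spec (P := (Q · n)) (Nat.zero_le n) hn

theorem exists_tendstoUniformlyOn_limsup_le {T X : Type*} [TopologicalSpace T]
    [PseudoMetricSpace X] {s : Set T} {Φ : ℕ → (T → X) → ℝ≥0∞} {γ : T → X} {A : ℝ≥0∞}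
    (hA : A ≠ ⊤) (hγ : ContinuousOn γ s) (hΦ : ∀ n η, Φ n η ≠ ⊤ → ContinuousOn η s)
    (h : ∀ θ > 0, ∀ᶠ n in atTop, ∃ η, (∀ t ∈ s, dist (η t) (γ t) ≤ θ) ∧
      Φ n η ≤ A + ENNReal.ofReal θ) :
    ∃ γs : ℕ → T → X, (∀ n, ContinuousOn (γs n) s) ∧ TendstoUniformlyOn γs γ atTop s ∧
      limsup (fun n => Φ n (γs n)) atTop ≤ A := by
  obtain ⟨N, hN, hη⟩ := exists_tendsto_eventually_of_forall_eventually
    fun k : ℕ => h (1 / ((k : ℝ) + 1)) Nat.one_div_pos_of_nat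
  have hθ : Tendsto (fun n => 1 / ((N n : ℝ) + 1)) atTop (𝓝 0) :=
    tendsto_one_div_add_atTop_nhds_zero_nat.comp hN
  have hbound : Tendsto (fun n => A + ENNReal.ofReal (1 / ((N n : ℝ) + 1))) atTop (𝓝 A) := by
    simpa using tendsto_const_nhds.add (ENNReal.tendsto_ofReal hθ)
  obtain ⟨η, hη⟩ := hη.choice
  have hη_eq : ∀ᶠ n in atTop, (if ContinuousOn (η n) s then η n else γ) = η n :=
    hη.mono fun n hn => if_pos (hΦ n _ (ne_top_of_le_ne_top (by finiteness) hn.2))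
  refine ⟨fun n => if ContinuousOn (η n) s then η n else γ, fun n => ?_,
    Metric.tendstoUniformlyOn_iff.2 fun ε hε => ?_, ?_⟩
  · beta_reduce
    split_ifs with hc
    exacts [hc, hγ]
  · filter_upwards [hη, hη_eq, hθ.eventually_lt_const hε] with n hn hn_eq hnε t ht
    rw [hn_eq, dist_comm]
    exact (hn.1 t ht).trans_lt hnε
  · rw [← hbound.limsup_eq]
    refine limsup_le_limsup ?_
    filter_upwards [hη, hη_eq] with n hn hn_eq
    rw [hn_eq]
    exact hn.2

end Diagonal

section RecoverySequence

variable {E : Type*} [NormedAddCommGroup E] [InnerProductSpace ℝ E] {lam θ M : ℝ}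
  {F : ℕ → E → EReal} {f : E → EReal} {γ : ℝ → E} {a b : ℝ}

theorem IsACCurve.continuousOn (hab : a ≤ b) (hγ : IsACCurve a b γ) :
    ContinuousOn γ (Icc a b) := by
  obtain ⟨u, hu, hγu⟩ := hγ
  rw [← uIcc_of_le hab] at hu ⊢
  exact (continuousOn_const.add (intervalIntegral.continuousOn_primitive_interval hu)).congr
    fun t ht => hγu t (uIcc_of_le hab ▸ ht)

theorem continuousOn_of_actionFn_ne_top (hab : a ≤ b) (h : actionFn lam f a b γ ≠ ⊤) :
    ContinuousOn γ (Icc a b) :=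
  IsACCurve.continuousOn hab (by_contra fun hγ => h (dif_neg hγ))

theorem eventually_recoveryCost_le (lam M : ℝ) {V S A : ℝ≥0∞} {ω : ℝ} (hω : 0 < ω) (hθ : 0 < θ)
    (hA : V + S < A) : ∀ᶠ δ in 𝓝[>] 0, δ ≤ 2 ∧ |lam| * δ ≤ 1 / 2 ∧ δ < ω ∧
      δ ^ 2 + δ * (2 * M) ≤ θ ∧ recoveryCost lam (2 * M) V S δ ≤ A := by
  have hsmall {φ : ℝ → ℝ} {ε : ℝ} (hφ : Continuous φ) (hε : φ 0 < ε) : ∀ᶠ δ in 𝓝[>] 0, φ δ < ε :=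
    (hφ.continuousAt.eventually_lt_const hε).filter_mono nhdsWithin_le_nhds
  filter_upwards [hsmall continuous_id zero_lt_two,
    hsmall (continuous_const_mul |lam|) (by simp : |lam| * 0 < 1 / 2), hsmall continuous_id hω,
    hsmall (by fun_prop : Continuous fun δ : ℝ => δ ^ 2 + δ * (2 * M)) (by simpa using hθ),
    ((tendsto_recoveryCost lam (2 * M) V S).eventually_lt_const hA).filter_mono
      nhdsWithin_le_nhds] with δ h₁ h₂ h₃ h₄ h₅
  exact ⟨h₁.le, h₂.le, h₃, h₄.le, h₅.le⟩

variable [CompleteSpace E]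

theorem Mosco.eventually_exists_theta_le_recoveryCost (hM : Mosco F f) (hF : ∀ n x, F n x ≠ ⊥)
    (hFc : ∀ n, LambdaConvex lam (F n)) (hFl : ∀ n, LowerSemicontinuous (F n))
    (hf : ∀ x, f x ≠ ⊥) {xs₀ xs₁ q₀ q₁ : ℕ → E} {x₀ x₁ : E}
    (hx₀ : Tendsto xs₀ atTop (𝓝 x₀)) (hx₁ : Tendsto xs₁ atTop (𝓝 x₁))
    (hq₀ : ∀ n, q₀ n ∈ subdiff lam (F n) (xs₀ n)) (hq₁ : ∀ n, q₁ n ∈ subdiff lam (F n) (xs₁ n))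
    (hq₀M : ∀ n, ‖q₀ n‖ ≤ M) (hq₁M : ∀ n, ‖q₁ n‖ ≤ M) {δ : ℝ} (hδ : 0 < δ) (hδ2 : δ ≤ 2)
    (hlamδ : |lam| * δ ≤ 1 / 2) {m : ℝ → ℝ≥0∞} {g y p : ℝ → E} (hm : Measurable m)
    (hm₀ : ∀ r ∉ Ioc 0 1, m r = 0) (hg : IsSpeedBound m g) (hgK : IsCompact (range g))
    (hg₀ : ∀ u ≤ 0, g u = x₀) (hg₁ : ∀ u ≥ 1, g u = x₁)
    (hy : ∀ u, ResolventStep lam f δ (g u) (y u) (p u)) (hyθ : ∀ u, ‖g u - y u‖ ≤ θ) :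
    ∀ᶠ n in atTop, ∃ Y : ℝ → E, (∀ u, ‖Y u - g u‖ ≤ θ + δ ^ 2 + δ * (2 * M)) ∧
      Theta lam (F n) (xs₀ n) (xs₁ n) (fun t => Y ((1 + 2 * δ) * t + -δ)) ≤
        recoveryCost lam (2 * M) (∫⁻ r, m r ^ 2)
          (∫⁻ u in Ioc 0 1, gradNorm lam f (g u) ^ 2) δ := by
  have hε : 0 < δ ^ 2 / 4 := by positivity
  obtain ⟨C, hC⟩ := isBounded_iff_forall_norm_le.1 (Metric.isBounded_range_of_tendsto xs₀ hx₀)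
  filter_upwards [hM.eventually_forall_norm_resolvent_sub_resolvent_le hF hFc hFl hf
      (fun n => (hC _ (mem_range_self n)).trans (le_max_left C M))
      (fun n => (hq₀M n).trans (le_max_right C M)) hq₀ hδ hlamδ hgK
      (forall_mem_range.2 fun u => ⟨_, _, hy u⟩) hε,
    Metric.tendsto_nhds.1 hx₀ _ hε, Metric.tendsto_nhds.1 hx₁ _ hε] with n hclose hn₀ hn₁
  rw [dist_eq_norm] at hn₀ hn₁
  exact exists_theta_le_recoveryCost (hFc n) (hF n) (hFl n) hf hδ hδ2 hlamδ hm hm₀ hg hg₀ hg₁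
    (hq₀ n) (hq₁ n) (hq₀M n) (hq₁M n) hn₀.le hn₁.le hy hyθ fun u x' y' p' hx' hy' =>
      hclose (g u) (mem_range_self u) x' _ _ y' p' hx' (hy u) hy'

theorem Mosco.eventually_exists_theta_le (hM : Mosco F f) (hF : ∀ n x, F n x ≠ ⊥)
    (hFc : ∀ n, LambdaConvex lam (F n)) (hFl : ∀ n, LowerSemicontinuous (F n))
    (hf_top : ∃ z, f z ≠ ⊤) (hf : ∀ x, f x ≠ ⊥) (hfc : LambdaConvex lam f)
    (hfl : LowerSemicontinuous f) {xs₀ xs₁ q₀ q₁ : ℕ → E}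
    (hx₀ : Tendsto xs₀ atTop (𝓝 (γ 0))) (hx₁ : Tendsto xs₁ atTop (𝓝 (γ 1)))
    (hq₀ : ∀ n, q₀ n ∈ subdiff lam (F n) (xs₀ n)) (hq₁ : ∀ n, q₁ n ∈ subdiff lam (F n) (xs₁ n))
    (hq₀M : ∀ n, ‖q₀ n‖ ≤ M) (hq₁M : ∀ n, ‖q₁ n‖ ≤ M) (hfin : actionFn lam f 0 1 γ ≠ ⊤)
    (hθ : 0 < θ) :
    ∀ᶠ n in atTop, ∃ η : ℝ → E, (∀ t ∈ Icc 0 1, ‖η t - γ t‖ ≤ θ) ∧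
      Theta lam (F n) (xs₀ n) (xs₁ n) η ≤ actionFn lam f 0 1 γ + ENNReal.ofReal θ := by
  have hγ := continuousOn_of_actionFn_ne_top zero_le_one hfin
  have hact := actionFn_eq lam f zero_le_one γ
  obtain ⟨hV, hS⟩ := ENNReal.add_ne_top.1 (hact ▸ hfin)
  obtain ⟨m, hm, hg, hm₀, hmV⟩ := exists_isSpeedBound zero_le_one hV
  set g : ℝ → E := IccExtend zero_le_one ((Icc 0 1).domRestrict γ)
  have hgγ (u : ℝ) (hu : u ∈ Icc 0 1) : g u = γ u := IccExtend_of_mem _ _ hu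
  have hK : range g = γ '' Icc 0 1 := (IccExtend_range _ _).trans (range_domRestrict _ _)
  have hgK : IsCompact (range g) := hK ▸ isCompact_Icc.image_of_continuousOn hγ
  have hKf := hK ▸ image_subset_closure_of_lintegral_ne_top hf_top hfl zero_lt_one hγ hS
  obtain ⟨ω, hω, hωg⟩ := Metric.uniformContinuous_iff.1
    (hg.uniformContinuous hm (hmV ▸ hV)) (θ / 3) (by positivity)
  obtain ⟨δ, hδ, ⟨hδ2, hlamδ, hδω, hδθ, hcost⟩, hδK⟩ :=
    ((eventually_mem_nhdsWithin (a := (0 : ℝ)) (s := Ioi 0)).and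
      ((eventually_recoveryCost_le lam M hω (by positivity : 0 < θ / 3)
        (ENNReal.lt_add_right (hact ▸ hfin) (ENNReal.ofReal_pos.2 hθ).ne')).and
      (eventually_forall_norm_resolvent_sub_le hf hgK hKf (by positivity : 0 < θ / 3)))).exists
  obtain ⟨_, q, hq⟩ := closure_nonempty_iff.1 ⟨g 0, hKf (mem_range_self 0)⟩
  choose y p hy using fun u => hfc.exists_resolventStep hf hfl hq hδ
    (one_half_pos.trans_le (one_half_le_one_add_mul hδ.le hlamδ)) (g u)
  filter_upwards [hM.eventually_exists_theta_le_recoveryCost hF hFc hFl hf hx₀ hx₁ hq₀ hq₁ hq₀M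
    hq₁M hδ hδ2 hlamδ hm hm₀ hg hgK (fun _ => IccExtend_of_le_left _ _)
    (fun _ => IccExtend_of_right_le _ _) hy
    fun u => hδK _ (mem_range_self u) _ _ (hy u)] with n hn
  obtain ⟨Y, hYg, hY⟩ := hn
  refine ⟨fun t => Y ((1 + 2 * δ) * t + -δ), fun t ht => ?_, hY.trans ?_⟩
  · have hωt := hωg (a := (1 + 2 * δ) * t + -δ) (b := t) (by
      rw [Real.dist_eq, abs_lt]
      constructor <;> nlinarith [ht.1, ht.2, hδ.out])
    rw [dist_eq_norm, hgγ t ht] at hωt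
    linarith [norm_sub_le_norm_sub_add_norm_sub (Y ((1 + 2 * δ) * t + -δ))
      (g ((1 + 2 * δ) * t + -δ)) (γ t), hYg ((1 + 2 * δ) * t + -δ)]
  · rw [hact, hmV, setLIntegral_congr_fun measurableSet_Ioc
      fun u hu => by rw [hgγ u (Ioc_subset_Icc_self hu)]]
    exact hcost

theorem exists_forall_mem_subdiff_norm_le {xs : ℕ → E}
    (h : (⨆ n, gradNorm lam (F n) (xs n)) ≠ ⊤) :
    ∃ (q : ℕ → E) (M : ℝ), (∀ n, q n ∈ subdiff lam (F n) (xs n)) ∧ ∀ n, ‖q n‖ ≤ M := by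
  have hle := le_iSup fun n => gradNorm lam (F n) (xs n)
  choose q hq hqn using fun n => exists_enorm_eq_gradNorm (ne_top_of_le_ne_top h (hle n))
  exact ⟨q, _, hq, fun n => by
    simpa only [toReal_enorm] using ENNReal.toReal_mono h ((hqn n).trans_le (hle n))⟩

theorem Mosco.exists_limsup_theta_le (hM : Mosco F f) (hF : ∀ n x, F n x ≠ ⊥)
    (hFc : ∀ n, LambdaConvex lam (F n)) (hFl : ∀ n, LowerSemicontinuous (F n))
    (hf_top : ∃ z, f z ≠ ⊤) (hf : ∀ x, f x ≠ ⊥) (hfc : LambdaConvex lam f)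
    (hfl : LowerSemicontinuous f) {xs₀ xs₁ : ℕ → E} {x₀ x₁ : E}
    (hx₀ : Tendsto xs₀ atTop (𝓝 x₀)) (hx₁ : Tendsto xs₁ atTop (𝓝 x₁))
    (h₀ : (⨆ n, gradNorm lam (F n) (xs₀ n)) ≠ ⊤) (h₁ : (⨆ n, gradNorm lam (F n) (xs₁ n)) ≠ ⊤)
    (hγ : ContinuousOn γ (Icc 0 1)) :
    ∃ γs : ℕ → ℝ → E, (∀ n, ContinuousOn (γs n) (Icc 0 1)) ∧
      TendstoUniformlyOn γs γ atTop (Icc 0 1) ∧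
      limsup (fun n => Theta lam (F n) (xs₀ n) (xs₁ n) (γs n)) atTop ≤ Theta lam f x₀ x₁ γ := by
  by_cases hΘ : Theta lam f x₀ x₁ γ = ⊤
  · exact ⟨fun _ => γ, fun _ => hγ, fun u hu => Eventually.of_forall fun _ t _ =>
      refl_mem_uniformity hu, hΘ ▸ le_top⟩
  obtain ⟨rfl, rfl⟩ : γ 0 = x₀ ∧ γ 1 = x₁ := by_contra fun h => hΘ (if_neg h)
  have hact : Theta lam f (γ 0) (γ 1) γ = actionFn lam f 0 1 γ := if_pos ⟨rfl, rfl⟩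
  rw [hact] at hΘ ⊢
  obtain ⟨q₀, M₀, hq₀, hqM₀⟩ := exists_forall_mem_subdiff_norm_le h₀
  obtain ⟨q₁, M₁, hq₁, hqM₁⟩ := exists_forall_mem_subdiff_norm_le h₁
  refine exists_tendstoUniformlyOn_limsup_le hΘ hγ (fun n η hη => ?_) fun θ hθ => ?_
  · exact continuousOn_of_actionFn_ne_top zero_le_one
      (ne_top_of_le_ne_top hη (actionFn_le_theta lam (F n) _ _ η))
  · simpa only [dist_eq_norm] using hM.eventually_exists_theta_le hF hFc hFl hf_top hf hfc hfl
      hx₀ hx₁ hq₀ hq₁ (fun n => (hqM₀ n).trans (le_max_left M₀ M₁))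
      (fun n => (hqM₁ n).trans (le_max_right M₀ M₁)) hΘ hθ

end RecoverySequence

/-- Γ-convergence of the constrained action functionals under Mosco
convergence of uniformly λ-convex functions. -/
theorem statement0 (lam : ℝ) (fh : ℕ → H → EReal) (f : H → EReal)
    (hfh_proper : ∀ h, ProperFn (fh h)) (hfh_conv : ∀ h, LambdaConvex lam (fh h))
    (hfh_lsc : ∀ h, LowerSemicontinuous (fh h))
    (hf_proper : ProperFn f) (hf_conv : LambdaConvex lam f) (hf_lsc : LowerSemicontinuous f)
    (hM : Mosco fh f)
    (xh0 xh1 : ℕ → H) (x0 x1 : H)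
    (hx0 : Tendsto xh0 atTop (𝓝 x0)) (hx1 : Tendsto xh1 atTop (𝓝 x1))
    (hb0 : (⨆ h, gradNorm lam (fh h) (xh0 h)) ≠ ⊤)
    (hb1 : (⨆ h, gradNorm lam (fh h) (xh1 h)) ≠ ⊤) :
    (∀ γ : ℝ → H, ContinuousOn γ (Icc 0 1) →
      ∃ γh : ℕ → ℝ → H, (∀ h, ContinuousOn (γh h) (Icc 0 1)) ∧
        TendstoUniformlyOn γh γ atTop (Icc 0 1) ∧
        Filter.limsup (fun h => Theta lam (fh h) (xh0 h) (xh1 h) (γh h)) atTop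
          ≤ Theta lam f x0 x1 γ) ∧
    (∀ (γh : ℕ → ℝ → H) (γ : ℝ → H), (∀ h, ContinuousOn (γh h) (Icc 0 1)) →
      ContinuousOn γ (Icc 0 1) → TendstoUniformlyOn γh γ atTop (Icc 0 1) →
      Theta lam f x0 x1 γ
        ≤ Filter.liminf (fun h => Theta lam (fh h) (xh0 h) (xh1 h) (γh h)) atTop) := by
  have hF_bot : ∀ h x, fh h x ≠ ⊥ := fun h => (hfh_proper h).2
  have hF_top : ∀ h, ∃ z, fh h z ≠ ⊤ := fun h => (hfh_proper h).1
  refine ⟨fun γ hγ => ?_, fun γh γ hγh _ hunif => ?_⟩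
  · exact hM.exists_limsup_theta_le hF_bot hfh_conv hfh_lsc hf_proper.1 hf_proper.2 hf_conv hf_lsc
      hx0 hx1 hb0 hb1 hγ
  · exact hM.theta_le_liminf hF_top hfh_lsc hf_proper.1 hx0 hx1 hγh fun t ht =>
      hunif.tendsto_at ht

end
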